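/- arXiv:1712.03412 — 7 statements merged into one kernel-verified Lean document; each statement's English description precedes it below -/
import Mathlib

section
/- Let β̂ be the elastic-net estimator (a global minimizer of F) with λ₂ > 0, and fix k ∈ {1,…,p}. Then β̂_k = 0 if and only if |(1/n)·∑_{i=1}^n x_{ik}·θ·(exp(⟨X_i,β̂⟩) − y_i)/(θ + exp(⟨X_i,β̂⟩))| ≤ λ₁. -/
open Real BigOperators Finset MeasureTheory

/-- Inner product of a row of the design matrix with a coefficient vector. -/
def dotp {p : ℕ} (u v : Fin p → ℝ) : ℝ := ∑ j, u j * v j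

/-- Average negative binomial negative log-likelihood. -/
noncomputable def negLogLik (n p : ℕ) (θ : ℝ) (x : Fin n → Fin p → ℝ)
    (y : Fin n → ℝ) (β : Fin p → ℝ) : ℝ :=
  -(1 / (n : ℝ)) *
    ∑ i, (y i * dotp (x i) β - (θ + y i) * Real.log (θ + Real.exp (dotp (x i) β)))

/-- Elastic-net objective function. -/
noncomputable def enObj (n p : ℕ) (θ : ℝ) (x : Fin n → Fin p → ℝ) (y : Fin n → ℝ)
    (lam1 lam2 : ℝ) (β : Fin p → ℝ) : ℝ :=
  negLogLik n p θ x y β + lam1 * ∑ j, |β j| + lam2 * ∑ j, (β j) ^ 2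

/-- `j`-th component of the gradient of the average negative log-likelihood. -/
noncomputable def gradComp (n p : ℕ) (θ : ℝ) (x : Fin n → Fin p → ℝ) (y : Fin n → ℝ)
    (β : Fin p → ℝ) (j : Fin p) : ℝ :=
  (1 / (n : ℝ)) *
    ∑ i, x i j * θ * (Real.exp (dotp (x i) β) - y i) / (θ + Real.exp (dotp (x i) β))

/-!
Along the `k`-th coordinate the objective is, up to a constant, `l t + lam1 * |t| + lam2 * t ^ 2`
with `l` differentiable. If it has a local minimum at the kink `t = 0`, both one-sided derivatives
point upwards, which is `|l'| ≤ lam1`. At a local minimum `b ≠ 0` its derivative vanishes;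
multiplying by `b` gives `l' * b + lam1 * |b| + 2 * lam2 * b ^ 2 = 0`, whereas `|l'| ≤ lam1` would
make the left-hand side positive.
-/

theorem nonneg_of_isLocalMinOn_Ici {f : ℝ → ℝ} {f' a : ℝ}
    (hmin : IsLocalMinOn f (Set.Ici a) a) (hf : HasDerivWithinAt f f' (Set.Ici a) a) :
    0 ≤ f' := by
  have hone : (1 : ℝ) ∈ posTangentConeAt (Set.Ici a) a :=
    mem_posTangentConeAt_of_segment_subset <|
      (convex_Ici a).segment_subset Set.self_mem_Ici (by simp)
  simpa using hmin.hasFDerivWithinAt_nonneg hf.hasFDerivWithinAt hone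

section Kink

variable {g : ℝ → ℝ} {g' lam b : ℝ}

theorem neg_le_deriv_of_isLocalMin_add_mul_abs (hg : HasDerivAt g g' 0)
    (hmin : IsLocalMin (fun t ↦ g t + lam * |t|) 0) : -lam ≤ g' := by
  have hright : HasDerivWithinAt (fun t ↦ g t + lam * |t|) (g' + lam) (Set.Ici 0) 0 := by
    have hlin : HasDerivAt (fun t ↦ g t + lam * t) (g' + lam) 0 := by
      simpa using hg.fun_add ((hasDerivAt_id (0 : ℝ)).const_mul lam)
    refine hlin.hasDerivWithinAt.congr (fun t ht ↦ ?_) (by simp)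
    rw [abs_of_nonneg ht]
  exact neg_le_iff_add_nonneg.2 (nonneg_of_isLocalMinOn_Ici (hmin.on _) hright)

theorem abs_deriv_le_of_isLocalMin_add_mul_abs (hg : HasDerivAt g g' 0)
    (hmin : IsLocalMin (fun t ↦ g t + lam * |t|) 0) : |g'| ≤ lam := by
  have hg_neg : HasDerivAt (fun t ↦ g (-t)) (-g') 0 := by
    rw [← neg_zero] at hg
    simpa [Function.comp_def] using hg.comp 0 (hasDerivAt_neg 0)
  have hmin_neg : IsLocalMin (fun t ↦ g (-t) + lam * |t|) 0 := by
    rw [← neg_zero] at hmin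
    simpa [Function.comp_def] using hmin.comp_continuous continuous_neg.continuousAt
  exact abs_le.2 ⟨neg_le_deriv_of_isLocalMin_add_mul_abs hg hmin,
    neg_le_neg_iff.1 (neg_le_deriv_of_isLocalMin_add_mul_abs hg_neg hmin_neg)⟩

theorem deriv_add_mul_sign_eq_zero_of_isLocalMin (hb : b ≠ 0) (hg : HasDerivAt g g' b)
    (hmin : IsLocalMin (fun t ↦ g t + lam * |t|) b) : g' + lam * SignType.sign b = 0 :=
  hmin.hasDerivAt_eq_zero (hg.add ((hasDerivAt_abs hb).const_mul lam))

end Kink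

section ElasticNet

variable {lam1 lam2 : ℝ}

theorem eq_zero_iff_abs_deriv_le_of_isLocalMin {l : ℝ → ℝ} {l' b : ℝ} (hlam2 : 0 < lam2)
    (hl : HasDerivAt l l' b) (hmin : IsLocalMin (fun t ↦ l t + lam1 * |t| + lam2 * t ^ 2) b) :
    b = 0 ↔ |l'| ≤ lam1 := by
  have hsmooth : HasDerivAt (fun t ↦ l t + lam2 * t ^ 2) (l' + lam2 * (2 * b)) b := by
    simpa using hl.fun_add ((hasDerivAt_pow 2 b).const_mul lam2)
  simp only [add_right_comm _ (lam1 * _)] at hmin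
  constructor
  · rintro rfl
    simpa using abs_deriv_le_of_isLocalMin_add_mul_abs hsmooth hmin
  · intro hle
    by_contra hb
    have hstat : l' * b + lam1 * |b| + 2 * lam2 * b ^ 2 = 0 := by
      rw [← sign_mul_self b]
      linear_combination b * deriv_add_mul_sign_eq_zero_of_isLocalMin hb hsmooth hmin
    have hgrad : -(lam1 * |b|) ≤ l' * b := calc
      -(lam1 * |b|) ≤ -(|l'| * |b|) := by gcongr
      _ = -|l' * b| := by rw [abs_mul]
      _ ≤ l' * b := neg_abs_le _
    have hridge : 0 < 2 * lam2 * b ^ 2 := by positivity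
    linarith

variable {ι : Type*} [Fintype ι] [DecidableEq ι]

theorem sum_comp_update {α M : Type*} [AddCommMonoid M] (f : α → M) (v : ι → α) (k : ι) (t : α) :
    ∑ j, f (Function.update v k t j) = f t + ∑ j ∈ univ \ {k}, f (v j) := by
  simpa only [← Function.comp_update, Function.comp_apply] using
    sum_update_of_mem (mem_univ k) (f ∘ v) (f t)

theorem eq_zero_iff_abs_deriv_update_le_of_isLocalMin {L : (ι → ℝ) → ℝ} {L' : ℝ} {β : ι → ℝ}
    {k : ι} (hlam2 : 0 < lam2) (hL : HasDerivAt (fun t ↦ L (Function.update β k t)) L' (β k))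
    (hmin : IsLocalMin (fun t ↦ L (Function.update β k t)
      + lam1 * ∑ j, |Function.update β k t j| + lam2 * ∑ j, Function.update β k t j ^ 2) (β k)) :
    β k = 0 ↔ |L'| ≤ lam1 := by
  refine eq_zero_iff_abs_deriv_le_of_isLocalMin hlam2 (hL.add_const
    (lam1 * ∑ j ∈ univ \ {k}, |β j| + lam2 * ∑ j ∈ univ \ {k}, β j ^ 2)) ?_
  convert hmin using 2 with t
  rw [sum_comp_update (|·|), sum_comp_update (· ^ 2)]
  ring

end ElasticNet

theorem hasDerivAt_dotp_update {p : ℕ} (u v : Fin p → ℝ) (k : Fin p) (t : ℝ) :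
    HasDerivAt (fun s ↦ dotp u (Function.update v k s)) (u k) t := by
  have hcoord := hasDerivAt_pi.1 (hasDerivAt_update v k t)
  simpa [dotp, Pi.single_apply] using
    HasDerivAt.fun_sum fun j (_ : j ∈ univ) ↦ (hcoord j).const_mul (u j)

theorem hasDerivAt_mul_sub_mul_log_add_exp {θ η : ℝ} (hne : θ + exp η ≠ 0) (y : ℝ) :
    HasDerivAt (fun s ↦ y * s - (θ + y) * log (θ + exp s))
      (-(θ * (exp η - y) / (θ + exp η))) η := by
  refine (((hasDerivAt_id η).const_mul y).fun_sub
    ((((hasDerivAt_exp η).const_add θ).log hne).const_mul (θ + y))).congr_deriv ?_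
  field_simp
  ring

theorem hasDerivAt_negLogLik_update {n p : ℕ} {θ : ℝ} (hθ : 0 ≤ θ)
    (x : Fin n → Fin p → ℝ) (y : Fin n → ℝ) (β : Fin p → ℝ) (k : Fin p) :
    HasDerivAt (fun t ↦ negLogLik n p θ x y (Function.update β k t))
      (gradComp n p θ x y β k) (β k) := by
  have hne (i : Fin n) : θ + exp (dotp (x i) (Function.update β k (β k))) ≠ 0 := by positivity
  have hterm (i : Fin n) := HasDerivAt.comp (β k)
    (hasDerivAt_mul_sub_mul_log_add_exp (hne i) (y i)) (hasDerivAt_dotp_update (x i) β k (β k))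
  refine ((HasDerivAt.fun_sum fun i (_ : i ∈ univ) ↦ hterm i).const_mul
    (-(1 / (n : ℝ)))).congr_deriv ?_
  simp only [Function.update_eq_self, gradComp, neg_mul, sum_neg_distrib, mul_neg, neg_neg]
  congr! 2 with i
  ring

theorem stmt1_general {n p : ℕ} {θ : ℝ} (hθ : 0 ≤ θ) (x : Fin n → Fin p → ℝ) (y : Fin n → ℝ)
    {lam1 lam2 : ℝ} (hlam2 : 0 < lam2) {β : Fin p → ℝ} {k : Fin p}
    (hmin : IsLocalMin (fun t ↦ enObj n p θ x y lam1 lam2 (Function.update β k t)) (β k)) :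
    β k = 0 ↔ |gradComp n p θ x y β k| ≤ lam1 :=
  eq_zero_iff_abs_deriv_update_le_of_isLocalMin hlam2 (hasDerivAt_negLogLik_update hθ x y β k) hmin

theorem stmt1
    (n p : ℕ) (hn : 1 ≤ n) (hp : 1 ≤ p)
    (θ : ℝ) (hθ : 0 < θ)
    (x : Fin n → Fin p → ℝ) (y : Fin n → ℝ) (hy : ∀ i, 0 ≤ y i)
    (lam1 lam2 : ℝ) (hlam1 : 0 < lam1) (hlam2 : 0 < lam2)
    (betah : Fin p → ℝ)
    (hmin : ∀ β : Fin p → ℝ,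
      enObj n p θ x y lam1 lam2 betah ≤ enObj n p θ x y lam1 lam2 β)
    (k : Fin p) :
    betah k = 0 ↔ |gradComp n p θ x y betah k| ≤ lam1 := by
  refine stmt1_general hθ.le x y hlam2 (.of_forall fun t ↦ ?_)
  simpa only [Function.update_eq_self] using hmin (Function.update betah k t)
end

section
/- Let β̂ be the elastic-net estimator, let β* ∈ ℝ^p with support H = {j : β*_j ≠ 0}, set z* = ‖ℓ̇(β*) + 2λ₂·β*‖_∞ and Δ = β̂ − β*. Then (λ₁ − z*)·‖Δ_{H^c}‖₁ ≤ Δᵀ·[ℓ̇(β̂) − ℓ̇(β*) + 2λ₂·Δ] + (λ₁ − z*)·‖Δ_{H^c}‖₁ ≤ (λ₁ + z*)·‖Δ_H‖₁. -/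
/-!
The ridge term is absorbed into the loss: `G β = ∇ℓ(β) + 2 λ₂ β` is the gradient of the convex
function `ℓ + λ₂ ‖·‖₂²`, so `β̂` is an `ℓ¹`-penalised minimiser of a convex differentiable function.
The left inequality is monotonicity of `G`. For the right one, moving from `β̂` towards `β*` gives
the variational inequality `0 ≤ ⟨β* - β̂, G β̂⟩ + λ₁ (‖β*‖₁ - ‖β̂‖₁)`; it remains to subtract
`⟨Δ, G β*⟩`, which is at least `-z* ‖Δ‖₁` by Hölder's inequality, and to use that `β*` vanishes
off `H`.
-/

open Real BigOperators Finset MeasureTheory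

section LineDeriv

variable {E : Type*} [AddCommGroup E] [Module ℝ E] {s : Set E} {f φ : E → ℝ} {f' : ℝ}
  {u v : E}

lemma lineDeriv_add_sub_nonneg_of_isMinOn_add (hf : HasLineDerivAt ℝ f f' u (v - u))
    (hφ : ConvexOn ℝ s φ) (hu : u ∈ s) (hv : v ∈ s) (hmin : IsMinOn (fun w => f w + φ w) s u) :
    0 ≤ f' + (φ v - φ u) := by
  suffices φ u - φ v ≤ f' by linarith
  refine ge_of_tendsto hf.tendsto_slope_zero_right ?_
  filter_upwards [Ioo_mem_nhdsGT (zero_lt_one (α := ℝ))] with t ⟨ht0, ht1⟩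
  have hcomb : u + t • (v - u) = (1 - t) • u + t • v := by module
  have hmem : u + t • (v - u) ∈ s := hφ.1.add_smul_sub_mem hu hv ⟨ht0.le, ht1.le⟩
  have hle : f u + φ u ≤ f (u + t • (v - u)) + φ (u + t • (v - u)) := hmin hmem
  have hconv : φ (u + t • (v - u)) ≤ (1 - t) * φ u + t * φ v :=
    hcomb ▸ hφ.2 hu hv (sub_nonneg.2 ht1.le) ht0.le (sub_add_cancel 1 t)
  rw [smul_eq_mul, inv_mul_eq_div, le_div_iff₀ ht0]
  linarith

lemma lineDeriv_le_sub_of_convexOn (hf : ConvexOn ℝ s f) (hu : u ∈ s) (hv : v ∈ s)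
    (hf' : HasLineDerivAt ℝ f f' u (v - u)) : f' ≤ f v - f u := by
  have hneg : HasLineDerivAt ℝ (fun w => -f w) (-f') u (v - u) := HasDerivAt.fun_neg hf'
  have hmin : IsMinOn (fun w => -f w + f w) s u := fun w _ => by simp
  have hvar : 0 ≤ -f' + (f v - f u) := lineDeriv_add_sub_nonneg_of_isMinOn_add hneg hf hu hv hmin
  linarith

end LineDeriv

section Gradient

open scoped Matrix

variable {ι κ : Type*} [Fintype ι] [Fintype κ] {φ : κ → ℝ → ℝ} {φ' : κ → ℝ}
  {s : Set (ι → ℝ)} {f f₁ f₂ : (ι → ℝ) → ℝ} {g₁ g₂ β β₀ : ι → ℝ}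

/-- `g` is the Gateaux gradient of `f` at `β` for the standard dot product. The optimality
conditions only differentiate along segments, and Mathlib's `HasGradientAt` would require the
Euclidean structure of `EuclideanSpace ℝ ι`. -/
def HasGateauxGradientAt (f : (ι → ℝ) → ℝ) (g β : ι → ℝ) : Prop :=
  ∀ d, HasLineDerivAt ℝ f (d ⬝ᵥ g) β d

lemma HasGateauxGradientAt.add (h₁ : HasGateauxGradientAt f₁ g₁ β)
    (h₂ : HasGateauxGradientAt f₂ g₂ β) :
    HasGateauxGradientAt (fun b => f₁ b + f₂ b) (g₁ + g₂) β := fun d => by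
  rw [dotProduct_add]
  exact HasDerivAt.fun_add (h₁ d) (h₂ d)

lemma hasGateauxGradientAt_sum_mulVec (X : Matrix κ ι ℝ)
    (hφ : ∀ i, HasDerivAt (φ i) (φ' i) ((X *ᵥ β) i)) :
    HasGateauxGradientAt (fun b => ∑ i, φ i ((X *ᵥ b) i)) (φ' ᵥ* X) β := fun d => by
  have hline (i : κ) :
      HasDerivAt (fun t : ℝ => (X *ᵥ (β + t • d)) i) ((X *ᵥ d) i) 0 := by
    simpa [Matrix.mulVec_add, Matrix.mulVec_smul] using
      ((hasDerivAt_id (0 : ℝ)).mul_const ((X *ᵥ d) i)).const_add ((X *ᵥ β) i)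
  rw [dotProduct_comm, ← Matrix.dotProduct_mulVec]
  exact HasDerivAt.fun_sum fun i _ => (hφ i).comp_of_eq 0 (hline i) (by simp)

lemma convexOn_sum_mulVec (X : Matrix κ ι ℝ) (hφ : ∀ i, ConvexOn ℝ Set.univ (φ i)) :
    ConvexOn ℝ Set.univ fun b : ι → ℝ => ∑ i, φ i ((X *ᵥ b) i) := by
  have hcomp (i : κ) : ConvexOn ℝ Set.univ fun b : ι → ℝ => φ i ((X *ᵥ b) i) :=
    (hφ i).comp_linearMap (LinearMap.proj (φ := fun _ => ℝ) i ∘ₗ X.mulVecLin)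
  refine ⟨convex_univ, fun b _ c _ p q hp hq hpq => ?_⟩
  simp only [Finset.smul_sum, ← Finset.sum_add_distrib]
  exact Finset.sum_le_sum fun i _ => (hcomp i).2 trivial trivial hp hq hpq

lemma dotProduct_sub_gradient_nonneg (hf : ConvexOn ℝ s f) (hβ : β ∈ s) (hβ₀ : β₀ ∈ s)
    (hg₁ : HasGateauxGradientAt f g₁ β) (hg₂ : HasGateauxGradientAt f g₂ β₀) :
    0 ≤ (β - β₀) ⬝ᵥ (g₁ - g₂) := by
  have h₁ : (β₀ - β) ⬝ᵥ g₁ ≤ f β₀ - f β := lineDeriv_le_sub_of_convexOn hf hβ hβ₀ (hg₁ _)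
  have h₂ : (β - β₀) ⬝ᵥ g₂ ≤ f β - f β₀ := lineDeriv_le_sub_of_convexOn hf hβ₀ hβ (hg₂ _)
  simp only [sub_dotProduct, dotProduct_sub] at h₁ h₂ ⊢
  linarith

end Gradient

section Penalty

open scoped Matrix

variable {ι : Type*} [Fintype ι] {f : (ι → ℝ) → ℝ} {g g₀ β β₀ : ι → ℝ} {s : Set (ι → ℝ)} {c z : ℝ}

lemma convexOn_mul_sum_abs (hc : 0 ≤ c) :
    ConvexOn ℝ Set.univ fun b : ι → ℝ => c * ∑ j, |b j| := by
  classical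
  have := convexOn_sum_mulVec (1 : Matrix ι ι ℝ) fun _ => convexOn_univ_norm (E := ℝ)
  simpa using this.smul hc

lemma convexOn_mul_sum_sq (hc : 0 ≤ c) :
    ConvexOn ℝ Set.univ fun b : ι → ℝ => c * ∑ j, b j ^ 2 := by
  classical
  have := convexOn_sum_mulVec (1 : Matrix ι ι ℝ) fun _ => even_two.convexOn_pow (𝕜 := ℝ)
  simpa using this.smul hc

lemma hasGateauxGradientAt_mul_sum_sq (c : ℝ) (β : ι → ℝ) :
    HasGateauxGradientAt (fun b => c * ∑ j, b j ^ 2) ((2 * c) • β) β := by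
  classical
  have hsq (j : ι) :
      HasDerivAt (fun t => c * t ^ 2) (((2 * c) • β) j) (((1 : Matrix ι ι ℝ) *ᵥ β) j) := by
    rw [Matrix.one_mulVec, Pi.smul_apply, smul_eq_mul]
    exact ((hasDerivAt_pow 2 (β j)).const_mul c).congr_deriv (by push_cast; ring)
  simpa only [Matrix.one_mulVec, Matrix.vecMul_one, ← Finset.mul_sum] using
    hasGateauxGradientAt_sum_mulVec 1 hsq

lemma abs_dotProduct_le_mul_sum_abs (b : ι → ℝ) (hz : ∀ j, |g j| ≤ z) :
    |b ⬝ᵥ g| ≤ z * ∑ j, |b j| := by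
  rw [Finset.mul_sum]
  refine (Finset.abs_sum_le_sum_abs _ _).trans (Finset.sum_le_sum fun j _ => ?_)
  rw [abs_mul, mul_comm]
  exact mul_le_mul_of_nonneg_right (hz j) (abs_nonneg _)

variable [DecidableEq ι] {H : Finset ι}

lemma sum_abs_sub_sum_abs_le (hH : ∀ j ∉ H, β₀ j = 0) :
    ∑ j, |β₀ j| - ∑ j, |β j| ≤ ∑ j ∈ H, |(β - β₀) j| - ∑ j ∈ Hᶜ, |(β - β₀) j| := by
  have hsupp : ∑ j ∈ H, |β₀ j| - ∑ j ∈ H, |β j| ≤ ∑ j ∈ H, |(β - β₀) j| := by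
    rw [← Finset.sum_sub_distrib]
    refine Finset.sum_le_sum fun j _ => ?_
    rw [Pi.sub_apply, abs_sub_comm]
    exact abs_sub_abs_le_abs_sub _ _
  have hβ₀ : ∑ j ∈ Hᶜ, |β₀ j| = 0 :=
    Finset.sum_eq_zero fun j hj => by rw [hH j (Finset.mem_compl.1 hj), abs_zero]
  have hβ : ∑ j ∈ Hᶜ, |(β - β₀) j| = ∑ j ∈ Hᶜ, |β j| :=
    Finset.sum_congr rfl fun j hj => by rw [Pi.sub_apply, hH j (Finset.mem_compl.1 hj), sub_zero]
  rw [← Finset.sum_add_sum_compl H fun j => |β₀ j|, ← Finset.sum_add_sum_compl H fun j => |β j|]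
  linarith

lemma dotProduct_sub_add_le_of_isMinOn_add_sum_abs (hc : 0 ≤ c) (hs : Convex ℝ s)
    (hβ : β ∈ s) (hβ₀ : β₀ ∈ s) (hg : HasGateauxGradientAt f g β)
    (hmin : IsMinOn (fun b => f b + c * ∑ j, |b j|) s β)
    (hH : ∀ j ∉ H, β₀ j = 0) (hz : ∀ j, |g₀ j| ≤ z) :
    (β - β₀) ⬝ᵥ (g - g₀) + (c - z) * ∑ j ∈ Hᶜ, |(β - β₀) j|
      ≤ (c + z) * ∑ j ∈ H, |(β - β₀) j| := by
  have hvar : 0 ≤ (β₀ - β) ⬝ᵥ g + (c * ∑ j, |β₀ j| - c * ∑ j, |β j|) :=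
    lineDeriv_add_sub_nonneg_of_isMinOn_add (f := f) (φ := fun b => c * ∑ j, |b j|) (hg _)
      ((convexOn_mul_sum_abs hc).subset (Set.subset_univ s) hs) hβ hβ₀ hmin
  have hnorm := mul_le_mul_of_nonneg_left (sum_abs_sub_sum_abs_le (β := β) hH) hc
  have hholder := (neg_le_abs _).trans (abs_dotProduct_le_mul_sum_abs (β - β₀) hz)
  rw [← Finset.sum_add_sum_compl H] at hholder
  simp only [sub_dotProduct, dotProduct_sub] at hvar hholder ⊢
  linarith

end Penalty

theorem stmt2_general {ι : Type*} [Fintype ι] [DecidableEq ι] {s : Set (ι → ℝ)} {L : (ι → ℝ) → ℝ}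
    {g g₀ β β₀ : ι → ℝ} {c₁ c₂ z : ℝ} {H : Finset ι} (hL : ConvexOn ℝ s L)
    (hg : HasGateauxGradientAt L g β) (hg₀ : HasGateauxGradientAt L g₀ β₀)
    (hc₁ : 0 ≤ c₁) (hc₂ : 0 ≤ c₂) (hβ : β ∈ s) (hβ₀ : β₀ ∈ s)
    (hmin : IsMinOn (fun b => L b + c₁ * ∑ j, |b j| + c₂ * ∑ j, b j ^ 2) s β)
    (hH : ∀ j ∉ H, β₀ j = 0) (hz : ∀ j, |g₀ j + 2 * c₂ * β₀ j| ≤ z) :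
    (c₁ - z) * ∑ j ∈ Hᶜ, |(β - β₀) j| ≤
        (β - β₀) ⬝ᵥ (g - g₀ + (2 * c₂) • (β - β₀)) + (c₁ - z) * ∑ j ∈ Hᶜ, |(β - β₀) j| ∧
      (β - β₀) ⬝ᵥ (g - g₀ + (2 * c₂) • (β - β₀)) + (c₁ - z) * ∑ j ∈ Hᶜ, |(β - β₀) j| ≤
        (c₁ + z) * ∑ j ∈ H, |(β - β₀) j| := by
  have hgrad := hg.add (hasGateauxGradientAt_mul_sum_sq c₂ β)
  have hgrad₀ := hg₀.add (hasGateauxGradientAt_mul_sum_sq c₂ β₀)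
  have hconv : ConvexOn ℝ s fun b => L b + c₂ * ∑ j, b j ^ 2 :=
    hL.add ((convexOn_mul_sum_sq hc₂).subset (Set.subset_univ s) hL.1)
  have hmin' : IsMinOn (fun b => L b + c₂ * ∑ j, b j ^ 2 + c₁ * ∑ j, |b j|) s β := by
    convert hmin using 2
    exact add_right_comm _ _ _
  rw [smul_sub, ← add_sub_add_comm]
  exact ⟨le_add_of_nonneg_left (dotProduct_sub_gradient_nonneg hconv hβ hβ₀ hgrad hgrad₀),
    dotProduct_sub_add_le_of_isMinOn_add_sum_abs hc₁ hL.1 hβ hβ₀ hgrad hmin' hH hz⟩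

section NegativeBinomial

open scoped Matrix

variable {n p : ℕ} {θ : ℝ}

/-- Negative binomial negative log-likelihood of one observation `y`, up to a term independent of
its linear predictor `η`. -/
noncomputable def negBinLoss (θ y η : ℝ) : ℝ :=
  (θ + y) * Real.log (θ + Real.exp η) - y * η

/-- Derivative of `negBinLoss` in the linear predictor `η`, the scalar factor of `gradComp`. -/
noncomputable def negBinLossDeriv (θ y η : ℝ) : ℝ :=
  θ * (Real.exp η - y) / (θ + Real.exp η)

lemma hasDerivAt_negBinLoss (hθ : 0 < θ) (y η : ℝ) :
    HasDerivAt (negBinLoss θ y) (negBinLossDeriv θ y η) η := by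
  have hpos : 0 < θ + Real.exp η := by positivity
  have hlog := ((Real.hasDerivAt_exp η).const_add θ).log hpos.ne'
  refine ((hlog.const_mul (θ + y)).sub ((hasDerivAt_id η).const_mul y)).congr_deriv ?_
  rw [negBinLossDeriv]
  field_simp
  ring

lemma monotone_negBinLossDeriv (hθ : 0 < θ) {y : ℝ} (hy : 0 ≤ y) :
    Monotone (negBinLossDeriv θ y) := by
  have hform (η : ℝ) : negBinLossDeriv θ y η = θ - θ * (θ + y) / (θ + Real.exp η) := by
    rw [negBinLossDeriv]
    field_simp
    ring
  intro a b hab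
  rw [hform, hform]
  gcongr

lemma convexOn_negBinLoss (hθ : 0 < θ) {y : ℝ} (hy : 0 ≤ y) :
    ConvexOn ℝ Set.univ (negBinLoss θ y) := by
  have hderiv := hasDerivAt_negBinLoss hθ y
  refine Monotone.convexOn_univ_of_deriv (fun η => (hderiv η).differentiableAt) ?_
  rw [deriv_eq hderiv]
  exact monotone_negBinLossDeriv hθ hy

lemma negLogLik_eq_sum_negBinLoss (θ : ℝ) (x : Fin n → Fin p → ℝ) (y : Fin n → ℝ) :
    negLogLik n p θ x y =
      fun β => ∑ i, 1 / (n : ℝ) * negBinLoss θ (y i) ((Matrix.of x *ᵥ β) i) := by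
  ext β
  rw [negLogLik, neg_mul, ← mul_neg, ← Finset.sum_neg_distrib, Finset.mul_sum]
  simp only [neg_sub]
  rfl

lemma gradComp_eq_vecMul (θ : ℝ) (x : Fin n → Fin p → ℝ) (y : Fin n → ℝ) (β : Fin p → ℝ) :
    gradComp n p θ x y β =
      (fun i => 1 / (n : ℝ) * negBinLossDeriv θ (y i) ((Matrix.of x *ᵥ β) i)) ᵥ* Matrix.of x := by
  ext j
  rw [gradComp, Finset.mul_sum]
  refine Finset.sum_congr rfl fun i _ => ?_
  change _ = 1 / (n : ℝ) * negBinLossDeriv θ (y i) (dotp (x i) β) * x i j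
  rw [negBinLossDeriv]
  ring

lemma convexOn_negLogLik (hθ : 0 < θ) (x : Fin n → Fin p → ℝ) {y : Fin n → ℝ}
    (hy : ∀ i, 0 ≤ y i) : ConvexOn ℝ Set.univ (negLogLik n p θ x y) := by
  rw [negLogLik_eq_sum_negBinLoss]
  exact convexOn_sum_mulVec _ fun i => (convexOn_negBinLoss hθ (hy i)).smul (by positivity)

lemma hasGateauxGradientAt_negLogLik (hθ : 0 < θ) (x : Fin n → Fin p → ℝ) (y : Fin n → ℝ)
    (β : Fin p → ℝ) : HasGateauxGradientAt (negLogLik n p θ x y) (gradComp n p θ x y β) β := by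
  rw [negLogLik_eq_sum_negBinLoss, gradComp_eq_vecMul]
  exact hasGateauxGradientAt_sum_mulVec _ fun i => (hasDerivAt_negBinLoss hθ (y i) _).const_mul _

end NegativeBinomial

theorem stmt2
    (n p : ℕ) (hn : 1 ≤ n) (hp : 1 ≤ p)
    (θ : ℝ) (hθ : 0 < θ)
    (x : Fin n → Fin p → ℝ) (y : Fin n → ℝ) (hy : ∀ i, 0 ≤ y i)
    (lam1 lam2 : ℝ) (hlam1 : 0 < lam1) (hlam2 : 0 < lam2)
    (betah : Fin p → ℝ)
    (hmin : ∀ β : Fin p → ℝ,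
      enObj n p θ x y lam1 lam2 betah ≤ enObj n p θ x y lam1 lam2 β)
    (betas : Fin p → ℝ)
    (H : Finset (Fin p)) (hH : H = Finset.univ.filter (fun j => betas j ≠ 0))
    (zstar : ℝ)
    (hz : zstar = ⨆ j : Fin p, |gradComp n p θ x y betas j + 2 * lam2 * betas j|)
    (Δ : Fin p → ℝ) (hΔ : Δ = fun j => betah j - betas j) :
    (lam1 - zstar) * (∑ j ∈ Hᶜ, |Δ j|) ≤
        (∑ j, Δ j * (gradComp n p θ x y betah j - gradComp n p θ x y betas j
            + 2 * lam2 * Δ j))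
          + (lam1 - zstar) * (∑ j ∈ Hᶜ, |Δ j|) ∧
      (∑ j, Δ j * (gradComp n p θ x y betah j - gradComp n p θ x y betas j
            + 2 * lam2 * Δ j))
          + (lam1 - zstar) * (∑ j ∈ Hᶜ, |Δ j|)
        ≤ (lam1 + zstar) * (∑ j ∈ H, |Δ j|) := by
  subst hH hz hΔ
  exact stmt2_general (convexOn_negLogLik hθ x hy) (hasGateauxGradientAt_negLogLik hθ x y betah)
    (hasGateauxGradientAt_negLogLik hθ x y betas) hlam1.le hlam2.le trivial trivial
    (fun β _ => hmin β) (by simp)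
    (le_ciSup (f := fun j => |gradComp n p θ x y betas j + 2 * lam2 * betas j|)
      (Set.finite_range _).bddAbove)
end

section
/- For all β, δ ∈ ℝ^p one has δᵀ·(ℓ̇(β+δ) − ℓ̇(β)) ≥ exp(−2K·‖δ‖₁)·δᵀ·ℓ̈(β)·δ, where K = max{|x_{ij}| : 1 ≤ i ≤ n, 1 ≤ j ≤ p}. -/
open Real BigOperators Finset MeasureTheory

/-- The quadratic form `δᵀ ℓ̈(β) δ` of the Hessian
`ℓ̈(β) = (1/n) ∑ᵢ Xᵢ Xᵢᵀ θ(θ+yᵢ)e^{⟨Xᵢ,β⟩}/(θ+e^{⟨Xᵢ,β⟩})²`. -/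
noncomputable def hessQuad (n p : ℕ) (θ : ℝ) (x : Fin n → Fin p → ℝ) (y : Fin n → ℝ)
    (β δ : Fin p → ℝ) : ℝ :=
  (1 / (n : ℝ)) *
    ∑ i, (dotp (x i) δ) ^ 2 *
      (θ * (θ + y i) * Real.exp (dotp (x i) β) / (θ + Real.exp (dotp (x i) β)) ^ 2)

/-!
Up to the factor `1 / n`, the row `Xᵢ` contributes `d * (s (t + d) - s t)` to the gradient increment
and `d² * s' t` to the Hessian form, where `t = ⟨Xᵢ, β⟩`, `d = ⟨Xᵢ, δ⟩` and `s` is the derivative of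
the loss in the linear predictor. Since `s'` loses at most a factor `exp |u|` when its argument
moves by `u`, the mean value theorem gives `d * (s (t + d) - s t) ≥ exp (-|d|) * d² * s' t`, and
`|d| ≤ K‖δ‖₁` by Hölder. This yields even the constant `exp (-K‖δ‖₁)`.
-/

lemma mul_sub_sq_le_sub_mul_image_sub_of_le_hasDerivAt {f f' : ℝ → ℝ} {a b m : ℝ}
    (hf : ∀ s ∈ Set.uIcc a b, HasDerivAt f (f' s) s) (hm : ∀ s ∈ Set.uIcc a b, m ≤ f' s) :
    m * (b - a) ^ 2 ≤ (b - a) * (f b - f a) := by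
  wlog hab : a ≤ b generalizing a b
  · have hba := this (Set.uIcc_comm a b ▸ hf) (Set.uIcc_comm a b ▸ hm) (le_of_not_ge hab)
    linarith
  rw [Set.uIcc_of_le hab] at hf hm
  have hmvt : m * (b - a) ≤ f b - f a :=
    (convex_Icc a b).mul_sub_le_image_sub_of_le_deriv
      (fun s hs => (hf s hs).continuousAt.continuousWithinAt)
      (fun s hs => (hf s (interior_subset hs)).differentiableAt.differentiableWithinAt)
      (fun s hs => (hf s (interior_subset hs)).deriv ▸ hm s (interior_subset hs))
      a (Set.left_mem_Icc.2 hab) b (Set.right_mem_Icc.2 hab) hab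
  calc m * (b - a) ^ 2 = (b - a) * (m * (b - a)) := by ring
    _ ≤ (b - a) * (f b - f a) := mul_le_mul_of_nonneg_left hmvt (sub_nonneg.2 hab)

section NegativeBinomial

/-- The derivative in the linear predictor `t` of the negative binomial negative log-likelihood
`(θ + y) * log (θ + exp t) - y * t` of a single response `y`. -/
noncomputable def negBinScore (θ y t : ℝ) : ℝ :=
  θ * (Real.exp t - y) / (θ + Real.exp t)

/-- The second derivative in the linear predictor `t` of the negative binomial negative
log-likelihood of a single response `y`: the weight of its row in the Hessian. -/
noncomputable def negBinWeight (θ y t : ℝ) : ℝ :=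
  θ * (θ + y) * Real.exp t / (θ + Real.exp t) ^ 2

variable {θ y : ℝ}

lemma hasDerivAt_negBinScore (hθ : 0 ≤ θ) (t : ℝ) :
    HasDerivAt (negBinScore θ y) (negBinWeight θ y t) t := by
  have hden : θ + Real.exp t ≠ 0 := by positivity
  have hexp := Real.hasDerivAt_exp t
  refine (((hexp.sub_const y).const_mul θ).div (hexp.const_add θ) hden).congr_deriv ?_
  rw [negBinWeight]
  ring

lemma negBinWeight_nonneg (hθ : 0 ≤ θ) (hy : 0 ≤ θ + y) (t : ℝ) : 0 ≤ negBinWeight θ y t := by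
  rw [negBinWeight]
  positivity

lemma add_exp_le_exp_max_mul (hθ : 0 ≤ θ) (s t : ℝ) :
    θ + Real.exp s ≤ Real.exp (max (s - t) 0) * (θ + Real.exp t) := by
  rw [mul_add, ← Real.exp_add]
  refine add_le_add ?_ (Real.exp_le_exp.2 ?_)
  · exact le_mul_of_one_le_left hθ (Real.one_le_exp (le_max_right _ _))
  · linarith [le_max_left (s - t) 0]

lemma exp_neg_abs_sub_mul_negBinWeight_le (hθ : 0 ≤ θ) (hy : 0 ≤ θ + y) (s t : ℝ) :
    Real.exp (-|s - t|) * negBinWeight θ y t ≤ negBinWeight θ y s := by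
  have habs : |s - t| = max (s - t) 0 + max (s - t) 0 - (s - t) := by
    rcases le_total (s - t) 0 with h | h
    · rw [abs_of_nonpos h, max_eq_right h]; ring
    · rw [abs_of_nonneg h, max_eq_left h]; ring
  have hexp : Real.exp (-|s - t|) * Real.exp t * Real.exp (max (s - t) 0) ^ 2 = Real.exp s := by
    rw [sq, ← Real.exp_add, ← Real.exp_add, ← Real.exp_add, habs]
    ring_nf
  calc Real.exp (-|s - t|) * negBinWeight θ y t
      = θ * (θ + y) * Real.exp s / (Real.exp (max (s - t) 0) * (θ + Real.exp t)) ^ 2 := by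
        rw [negBinWeight, ← hexp]
        field_simp
    _ ≤ negBinWeight θ y s := by
        rw [negBinWeight]
        gcongr
        exact add_exp_le_exp_max_mul hθ s t

lemma exp_neg_mul_sq_mul_negBinWeight_le (hθ : 0 ≤ θ) (hy : 0 ≤ θ + y) {c s t : ℝ}
    (hc : |s - t| ≤ c) :
    Real.exp (-c) * ((s - t) ^ 2 * negBinWeight θ y t) ≤
      (s - t) * (negBinScore θ y s - negBinScore θ y t) := by
  rw [mul_left_comm, mul_comm]
  refine mul_sub_sq_le_sub_mul_image_sub_of_le_hasDerivAt
    (fun r _ => hasDerivAt_negBinScore hθ r) fun r hr => ?_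
  have hrc : |r - t| ≤ c := (Set.abs_sub_left_of_mem_uIcc hr).trans hc
  calc Real.exp (-c) * negBinWeight θ y t ≤ Real.exp (-|r - t|) * negBinWeight θ y t := by
        gcongr
        exact negBinWeight_nonneg hθ hy t
    _ ≤ negBinWeight θ y r := exp_neg_abs_sub_mul_negBinWeight_le hθ hy r t

end NegativeBinomial

section Regression

variable {n p : ℕ}

lemma dotp_add (u v w : Fin p → ℝ) : dotp u (v + w) = dotp u v + dotp u w :=
  dotProduct_add u v w

lemma abs_dotp_le {u : Fin p → ℝ} {K : ℝ} (hu : ∀ j, |u j| ≤ K) (v : Fin p → ℝ) :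
    |dotp u v| ≤ K * ∑ j, |v j| := by
  calc |dotp u v| ≤ ∑ j, |u j * v j| := Finset.abs_sum_le_sum_abs _ _
    _ ≤ ∑ j, K * |v j| := by
        gcongr with j
        rw [abs_mul]
        gcongr
        exact hu j
    _ = K * ∑ j, |v j| := (Finset.mul_sum ..).symm

lemma sum_mul_gradComp (θ : ℝ) (x : Fin n → Fin p → ℝ) (y : Fin n → ℝ) (β δ : Fin p → ℝ) :
    ∑ j, δ j * gradComp n p θ x y β j =
      (1 / (n : ℝ)) * ∑ i, dotp (x i) δ * negBinScore θ (y i) (dotp (x i) β) := by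
  simp only [gradComp, dotp, negBinScore, Finset.mul_sum, Finset.sum_mul]
  rw [Finset.sum_comm]
  refine Finset.sum_congr rfl fun i _ => Finset.sum_congr rfl fun j _ => ?_
  ring

theorem stmt4_general {θ : ℝ} (hθ : 0 ≤ θ) {x : Fin n → Fin p → ℝ} {y : Fin n → ℝ}
    (hy : ∀ i, 0 ≤ θ + y i) (β : Fin p → ℝ) {δ : Fin p → ℝ} {c : ℝ}
    (hc : ∀ i, |dotp (x i) δ| ≤ c) :
    Real.exp (-c) * hessQuad n p θ x y β δ ≤
      ∑ j, δ j * (gradComp n p θ x y (β + δ) j - gradComp n p θ x y β j) := by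
  have hrow (i : Fin n) : dotp (x i) (β + δ) - dotp (x i) β = dotp (x i) δ := by
    rw [dotp_add, add_sub_cancel_left]
  simp only [mul_sub, Finset.sum_sub_distrib, sum_mul_gradComp]
  rw [← mul_sub, ← Finset.sum_sub_distrib, hessQuad, mul_left_comm, Finset.mul_sum]
  refine mul_le_mul_of_nonneg_left (Finset.sum_le_sum fun i _ => ?_) (by positivity)
  rw [← mul_sub, ← hrow i]
  exact exp_neg_mul_sq_mul_negBinWeight_le hθ (hy i) ((hrow i).symm ▸ hc i)

end Regression

theorem stmt4
    (n p : ℕ) (hn : 1 ≤ n) (hp : 1 ≤ p)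
    (θ : ℝ) (hθ : 0 < θ)
    (x : Fin n → Fin p → ℝ) (y : Fin n → ℝ) (hy : ∀ i, 0 ≤ y i)
    (K : ℝ) (hKub : ∀ i j, |x i j| ≤ K) (hKmax : ∃ i j, |x i j| = K) :
    ∀ β δ : Fin p → ℝ,
      Real.exp (-2 * K * ∑ j, |δ j|) * hessQuad n p θ x y β δ ≤
        ∑ j, δ j * (gradComp n p θ x y (fun l => β l + δ l) j - gradComp n p θ x y β j) := by
  intro β δ
  rw [mul_assoc, neg_mul]
  refine stmt4_general hθ.le (fun i => add_nonneg hθ.le (hy i)) β fun i => ?_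
  linarith [abs_dotp_le (hKub i) δ, abs_nonneg (dotp (x i) δ)]
end

section
/- Let μ_1,…,μ_n ∈ ℝ and β, b ∈ ℝ^p. Then there exist reals t_1,…,t_n, with each t_i lying in the closed interval between ⟨X_i,β⟩ and ⟨X_i,b⟩, such that (1/n)·∑_{i=1}^n (y_i − μ_i)·[ ⟨X_i, b − β⟩ − log( (θ + exp(⟨X_i,b⟩)) / (θ + exp(⟨X_i,β⟩)) ) ] = ∑_{j=1}^p (b_j − β_j)·(1/n)·∑_{i=1}^n θ·x_{ij}·(y_i − μ_i)/(θ + exp(t_i)). Consequently, if λ₁ > 0 and max_{1≤j≤p} |(1/n)·∑_{i=1}^n θ·x_{ij}·(y_i − μ_i)/(θ + exp(t_i))| ≤ λ₁/4 for these t_i, then the absolute value of the left-hand side is at most (λ₁/4)·‖b − β‖₁. -/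
open Real BigOperators Finset MeasureTheory

/-!
The function `s ↦ s - log (θ + exp s)` has derivative `θ / (θ + exp s)`, so for each observation the
mean value theorem between the two linear predictors writes the bracket as `θ / (θ + exp (t i))`
times a linear form in `b - β`. Exchanging the two sums gives the identity, and the bound is
Hölder's inequality for the pairing of `ℓ¹` with `ℓ^∞`.
-/

lemma exists_mem_uIcc_sub_eq_mul_sub {f f' : ℝ → ℝ} {a b : ℝ}
    (hf : ∀ s ∈ Set.uIcc a b, HasDerivWithinAt f (f' s) (Set.uIcc a b) s) :
    ∃ t ∈ Set.uIcc a b, f b - f a = f' t * (b - a) := by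
  obtain ⟨t, ht, h⟩ := domain_mvt (fun s hs => (hf s hs).hasFDerivWithinAt) (convex_uIcc a b)
    Set.left_mem_uIcc Set.right_mem_uIcc
  refine ⟨t, segment_eq_uIcc a b ▸ ht, h.trans ?_⟩
  simp [mul_comm]

lemma hasDerivAt_sub_log_add_exp {θ s : ℝ} (h : θ + exp s ≠ 0) :
    HasDerivAt (fun s => s - log (θ + exp s)) (θ / (θ + exp s)) s := by
  refine ((hasDerivAt_id s).sub (((hasDerivAt_exp s).const_add θ).log h)).congr_deriv ?_
  field_simp
  ring

lemma exists_mem_uIcc_sub_log_div_eq {θ a b : ℝ} (h : ∀ s ∈ Set.uIcc a b, θ + exp s ≠ 0) :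
    ∃ t ∈ Set.uIcc a b,
      b - a - log ((θ + exp b) / (θ + exp a)) = θ / (θ + exp t) * (b - a) := by
  obtain ⟨t, ht, hslope⟩ := exists_mem_uIcc_sub_eq_mul_sub fun s hs =>
    (hasDerivAt_sub_log_add_exp (h s hs)).hasDerivWithinAt
  refine ⟨t, ht, ?_⟩
  rw [← hslope, log_div (h b Set.right_mem_uIcc) (h a Set.left_mem_uIcc)]
  ring

lemma dotp_sub {p : ℕ} (u v w : Fin p → ℝ) :
    dotp u (fun j => v j - w j) = dotp u v - dotp u w :=
  dotProduct_sub u v w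

lemma mul_sum_mul_dotp {ι : Type*} [Fintype ι] {p : ℕ} (c : ℝ) (w : ι → ℝ) (x : ι → Fin p → ℝ)
    (d : Fin p → ℝ) :
    c * ∑ i, w i * dotp (x i) d = ∑ j, d j * (c * ∑ i, w i * x i j) :=
  calc c * ∑ i, w i * dotp (x i) d = c * ∑ j, d j * ∑ i, w i * x i j :=
        congrArg (c * ·) ((Matrix.dotProduct_mulVec w x d).trans (dotProduct_comm _ d))
    _ = ∑ j, d j * (c * ∑ i, w i * x i j) := by simp only [mul_sum, mul_left_comm]

lemma abs_sum_mul_le_mul_sum_abs {ι R : Type*} [CommRing R] [LinearOrder R] [IsOrderedRing R]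
    {s : Finset ι} {d g : ι → R} {C : R} (hg : ∀ j ∈ s, |g j| ≤ C) :
    |∑ j ∈ s, d j * g j| ≤ C * ∑ j ∈ s, |d j| :=
  calc |∑ j ∈ s, d j * g j| ≤ ∑ j ∈ s, |d j * g j| := abs_sum_le_sum_abs _ _
    _ ≤ ∑ j ∈ s, C * |d j| := sum_le_sum fun j hj => by
      rw [abs_mul, mul_comm]
      exact mul_le_mul_of_nonneg_right (hg j hj) (abs_nonneg _)
    _ = C * ∑ j ∈ s, |d j| := (mul_sum _ _ _).symm

theorem stmt8
    (n p : ℕ) (hn : 1 ≤ n) (hp : 1 ≤ p)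
    (θ : ℝ) (hθ : 0 < θ)
    (x : Fin n → Fin p → ℝ) (y : Fin n → ℝ)
    (μ : Fin n → ℝ) (β b : Fin p → ℝ) :
    ∃ t : Fin n → ℝ,
      (∀ i, t i ∈ Set.uIcc (dotp (x i) β) (dotp (x i) b)) ∧
      (1 / (n : ℝ)) * ∑ i, (y i - μ i) *
          (dotp (x i) (fun j => b j - β j)
            - Real.log ((θ + Real.exp (dotp (x i) b)) / (θ + Real.exp (dotp (x i) β))))
        = ∑ j, (b j - β j) *
            ((1 / (n : ℝ)) * ∑ i, θ * x i j * (y i - μ i) / (θ + Real.exp (t i))) ∧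
      ∀ lam1 : ℝ, 0 < lam1 →
        (∀ j, |(1 / (n : ℝ)) * ∑ i, θ * x i j * (y i - μ i) / (θ + Real.exp (t i))|
            ≤ lam1 / 4) →
        |(1 / (n : ℝ)) * ∑ i, (y i - μ i) *
            (dotp (x i) (fun j => b j - β j)
              - Real.log ((θ + Real.exp (dotp (x i) b)) / (θ + Real.exp (dotp (x i) β))))|
          ≤ lam1 / 4 * ∑ j, |b j - β j| := by
  choose t ht hslope using fun i => exists_mem_uIcc_sub_log_div_eq
    (a := dotp (x i) β) (b := dotp (x i) b) fun s _ => (add_pos hθ (exp_pos s)).ne'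
  have hident : 1 / (n : ℝ) * ∑ i, (y i - μ i) * (dotp (x i) (fun j => b j - β j)
          - log ((θ + exp (dotp (x i) b)) / (θ + exp (dotp (x i) β))))
      = ∑ j, (b j - β j) * (1 / (n : ℝ) * ∑ i, θ * x i j * (y i - μ i) / (θ + exp (t i))) :=
    calc
      _ = 1 / (n : ℝ) * ∑ i, (y i - μ i) * (θ / (θ + exp (t i)))
            * dotp (x i) (fun j => b j - β j) := by
        simp only [dotp_sub, hslope, mul_assoc]
      _ = ∑ j, (b j - β j)
            * (1 / (n : ℝ) * ∑ i, (y i - μ i) * (θ / (θ + exp (t i))) * x i j) :=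
        mul_sum_mul_dotp ..
      _ = _ := by
        congr! 4
        ring
  exact ⟨t, ht, hident, fun _ _ hbound =>
    hident ▸ abs_sum_mul_le_mul_sum_abs fun j _ => hbound j⟩
end

section
/- Assume ‖β*‖_∞ ≤ B for some B > 0, λ₁ = 8B·λ₂, and ε_n ≥ 0. If (P_n − P)(l₁(β*,·,·) − l₁(β̂,·,·)) ≤ (λ₁/4)·‖β̂ − β*‖₁ and (P_n − P)(l₂(β*,·) − l₂(β̂,·)) ≤ (λ₁/4)·(‖β̂ − β*‖₁ + ε_n), then ∑_{j∉H} |β̂_j − β*_j| ≤ 3.5·∑_{j∈H} |β̂_j − β*_j| + ε_n/2. -/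
open Real BigOperators Finset MeasureTheory

/-- Negative binomial loss `l(β,x,y)`. -/
noncomputable def nbLoss (p : ℕ) (θ : ℝ) (β x : Fin p → ℝ) (y : ℝ) : ℝ :=
  -y * dotp x β + (θ + y) * Real.log (θ + Real.exp (dotp x β))

/-- First part `l₁(β,x,y)` of the loss. -/
noncomputable def nbLoss1 (p : ℕ) (θ : ℝ) (β x : Fin p → ℝ) (y : ℝ) : ℝ :=
  -y * (dotp x β - Real.log (θ + Real.exp (dotp x β)))

/-- Second part `l₂(β,x)` of the loss. -/
noncomputable def nbLoss2 (p : ℕ) (θ : ℝ) (β x : Fin p → ℝ) : ℝ :=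
  θ * Real.log (θ + Real.exp (dotp x β))

/-!
Write `P_n` for the empirical mean and `P` for the expectation. Comparing `β̂` with `β*` in the
penalized problem, and `β*` with `β̂` in the population problem, bounds the growth of the penalty
from `β*` to `β̂` by the empirical process `(P_n - P)(l(β*) - l(β̂))`, hence by
`lam₁ / 2 * ‖β̂ - β*‖₁` up to an error. Off the support of `β*` the penalty grows by at least
`lam₁ * |β̂ j - β* j|`, while on the support it drops by at most
`(lam₁ + 2 * B * lam₂) * |β̂ j - β* j|`, because `t ↦ t ^ 2` lies above its tangents, whose slopes
on `[-B, B]` are at most `2 * B` in absolute value. Balancing the two confines `β̂ - β*` to a cone.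
-/

section Penalty

variable {ι : Type*} [Fintype ι] {lam₁ lam₂ B : ℝ} {βstar βhat : ι → ℝ} {H : Finset ι}

/-- The elastic net penalty `lam₁ ‖β‖₁ + lam₂ ‖β‖₂²`, which regularizes the empirical risk. -/
def elasticNet (lam₁ lam₂ : ℝ) (β : ι → ℝ) : ℝ :=
  lam₁ * ∑ j, |β j| + lam₂ * ∑ j, β j ^ 2

theorem elasticNet_eq_sum (lam₁ lam₂ : ℝ) (β : ι → ℝ) :
    elasticNet lam₁ lam₂ β = ∑ j, (lam₁ * |β j| + lam₂ * β j ^ 2) := by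
  rw [elasticNet, Finset.sum_add_distrib, Finset.mul_sum, Finset.mul_sum]

theorem sq_sub_sq_le_two_mul_abs_sub {a b B : ℝ} (hb : |b| ≤ B) :
    b ^ 2 - a ^ 2 ≤ 2 * B * |a - b| :=
  calc
    b ^ 2 - a ^ 2 = 2 * (b * (b - a)) - (b - a) ^ 2 := by ring
    _ ≤ 2 * (b * (b - a)) := sub_le_self _ (sq_nonneg _)
    _ ≤ 2 * (|b| * |a - b|) := by
      rw [abs_sub_comm, ← abs_mul]
      gcongr
      exact le_abs_self _
    _ ≤ 2 * (B * |a - b|) := by gcongr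
    _ = 2 * B * |a - b| := by ring

theorem elasticNet_coord_le (hlam₁ : 0 ≤ lam₁) (hlam₂ : 0 ≤ lam₂) {a b : ℝ} (hb : |b| ≤ B) :
    lam₁ * |b| + lam₂ * b ^ 2 ≤
      lam₁ * |a| + lam₂ * a ^ 2 + (lam₁ + 2 * B * lam₂) * |a - b| := by
  have habs : |b| - |a| ≤ |a - b| := abs_sub_comm a b ▸ abs_sub_abs_le_abs_sub b a
  have hsq : b ^ 2 - a ^ 2 ≤ 2 * B * |a - b| := sq_sub_sq_le_two_mul_abs_sub hb
  linarith [mul_le_mul_of_nonneg_left habs hlam₁, mul_le_mul_of_nonneg_left hsq hlam₂]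

variable [DecidableEq ι]

theorem elasticNet_le_add_sub (hlam₁ : 0 ≤ lam₁) (hlam₂ : 0 ≤ lam₂)
    (hsupp : ∀ j ∉ H, βstar j = 0) (hB : ∀ j ∈ H, |βstar j| ≤ B) :
    elasticNet lam₁ lam₂ βstar ≤ elasticNet lam₁ lam₂ βhat +
      (lam₁ + 2 * B * lam₂) * ∑ j ∈ H, |βhat j - βstar j| -
      lam₁ * ∑ j ∈ Hᶜ, |βhat j - βstar j| := by
  have hon : ∑ j ∈ H, (lam₁ * |βstar j| + lam₂ * βstar j ^ 2) ≤
      ∑ j ∈ H, (lam₁ * |βhat j| + lam₂ * βhat j ^ 2) +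
        (lam₁ + 2 * B * lam₂) * ∑ j ∈ H, |βhat j - βstar j| := by
    rw [Finset.mul_sum, ← Finset.sum_add_distrib]
    exact Finset.sum_le_sum fun j hj => elasticNet_coord_le hlam₁ hlam₂ (hB j hj)
  have hoff : ∑ j ∈ Hᶜ, (lam₁ * |βstar j| + lam₂ * βstar j ^ 2) +
      lam₁ * ∑ j ∈ Hᶜ, |βhat j - βstar j| ≤
        ∑ j ∈ Hᶜ, (lam₁ * |βhat j| + lam₂ * βhat j ^ 2) := by
    rw [Finset.mul_sum, ← Finset.sum_add_distrib]
    refine Finset.sum_le_sum fun j hj => ?_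
    simpa [hsupp j (Finset.mem_compl.1 hj)] using mul_nonneg hlam₂ (sq_nonneg (βhat j))
  rw [elasticNet_eq_sum, elasticNet_eq_sum, ← Finset.sum_add_sum_compl H,
    ← Finset.sum_add_sum_compl H fun j => lam₁ * |βhat j| + lam₂ * βhat j ^ 2]
  linarith

theorem cone_of_elasticNet_sub_le (hlam₁ : 0 ≤ lam₁) (hlam₂ : 0 ≤ lam₂)
    (hsupp : ∀ j ∉ H, βstar j = 0) (hB : ∀ j ∈ H, |βstar j| ≤ B) {c δ : ℝ}
    (hpen : elasticNet lam₁ lam₂ βhat - elasticNet lam₁ lam₂ βstar ≤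
      c * ∑ j, |βhat j - βstar j| + δ) :
    (lam₁ - c) * ∑ j ∈ Hᶜ, |βhat j - βstar j| ≤
      (lam₁ + 2 * B * lam₂ + c) * ∑ j ∈ H, |βhat j - βstar j| + δ := by
  rw [← Finset.sum_add_sum_compl H] at hpen
  linarith [elasticNet_le_add_sub (βhat := βhat) hlam₁ hlam₂ hsupp hB]

end Penalty

section Deviation

variable {Z : Type*} [MeasurableSpace Z] {Pn : (Z → ℝ) →ₗ[ℝ] ℝ} {P : Measure Z} {f g : Z → ℝ}

/-- The value `(P_n - P) f` of the empirical process. The empirical mean enters only through its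
linearity, so `P_n` may be any linear functional. -/
noncomputable def deviation (Pn : (Z → ℝ) →ₗ[ℝ] ℝ) (P : Measure Z) (f : Z → ℝ) : ℝ :=
  Pn f - ∫ z, f z ∂P

theorem deviation_add (hf : Integrable f P) (hg : Integrable g P) :
    deviation Pn P (f + g) = deviation Pn P f + deviation Pn P g := by
  simp only [deviation, map_add, integral_add' hf hg]
  ring

theorem deviation_sub (hf : Integrable f P) (hg : Integrable g P) :
    deviation Pn P (f - g) = deviation Pn P f - deviation Pn P g := by
  simp only [deviation, map_sub, integral_sub' hf hg]
  ring

theorem penalty_sub_le_deviation {a b : ℝ} (hf : Integrable f P) (hg : Integrable g P)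
    (hrisk : ∫ z, f z ∂P ≤ ∫ z, g z ∂P) (hpenalized : Pn g + b ≤ Pn f + a) :
    b - a ≤ deviation Pn P (f - g) := by
  rw [deviation_sub hf hg, deviation, deviation]
  linarith

end Deviation

theorem stmt10_general {ι Z : Type*} [Fintype ι] [DecidableEq ι] [MeasurableSpace Z]
    (Pn : (Z → ℝ) →ₗ[ℝ] ℝ) (P : Measure Z) {l l₁ l₂ : (ι → ℝ) → Z → ℝ}
    (hl : ∀ β, l β = l₁ β + l₂ β)
    (hl₁ : ∀ β, Integrable (l₁ β) P) (hl₂ : ∀ β, Integrable (l₂ β) P)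
    {lam₁ lam₂ B ε : ℝ} (hlam₁ : 0 < lam₁) (hlam₂ : 0 ≤ lam₂) (hlam : 8 * B * lam₂ ≤ lam₁)
    {βstar βhat : ι → ℝ} (hrisk : ∫ z, l βstar z ∂P ≤ ∫ z, l βhat z ∂P)
    (hpenalized : Pn (l βhat) + lam₁ * ∑ j, |βhat j| + lam₂ * ∑ j, βhat j ^ 2 ≤
      Pn (l βstar) + lam₁ * ∑ j, |βstar j| + lam₂ * ∑ j, βstar j ^ 2)
    {H : Finset ι} (hsupp : ∀ j ∉ H, βstar j = 0) (hB : ∀ j ∈ H, |βstar j| ≤ B)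
    (hdev₁ : deviation Pn P (l₁ βstar - l₁ βhat) ≤ lam₁ / 4 * ∑ j, |βhat j - βstar j|)
    (hdev₂ : deviation Pn P (l₂ βstar - l₂ βhat) ≤
      lam₁ / 4 * ((∑ j, |βhat j - βstar j|) + ε)) :
    ∑ j ∈ Hᶜ, |βhat j - βstar j| ≤ 3.5 * (∑ j ∈ H, |βhat j - βstar j|) + ε / 2 := by
  have hint : ∀ β, Integrable (l β) P := fun β => hl β ▸ (hl₁ β).add (hl₂ β)
  have hsplit : deviation Pn P (l βstar - l βhat) =
      deviation Pn P (l₁ βstar - l₁ βhat) + deviation Pn P (l₂ βstar - l₂ βhat) := by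
    rw [← deviation_add ((hl₁ _).sub (hl₁ _)) ((hl₂ _).sub (hl₂ _)), hl, hl, add_sub_add_comm]
  have hbasic : elasticNet lam₁ lam₂ βhat - elasticNet lam₁ lam₂ βstar ≤
      deviation Pn P (l βstar - l βhat) :=
    penalty_sub_le_deviation (hint _) (hint _) hrisk
      (by simpa only [elasticNet, ← add_assoc] using hpenalized)
  have hgrowth : elasticNet lam₁ lam₂ βhat - elasticNet lam₁ lam₂ βstar ≤
      lam₁ / 2 * ∑ j, |βhat j - βstar j| + lam₁ / 4 * ε := by
    linarith
  have hcone := cone_of_elasticNet_sub_le hlam₁.le hlam₂ hsupp hB hgrowth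
  have hslope : 2 * B * lam₂ * ∑ j ∈ H, |βhat j - βstar j| ≤
      lam₁ / 4 * ∑ j ∈ H, |βhat j - βstar j| := by
    gcongr
    linarith
  refine le_of_mul_le_mul_left ?_ hlam₁
  linarith

/-- The empirical mean `P_n f = (1 / n) ∑ i, f (z i)` of a sample `z`, as a linear functional
of `f`; it is `0` when `n = 0`. -/
noncomputable def empiricalMean {n : ℕ} {Z : Type*} (z : Fin n → Z) : (Z → ℝ) →ₗ[ℝ] ℝ where
  toFun f := 1 / (n : ℝ) * ∑ i, f (z i)
  map_add' f g := by simp only [Pi.add_apply, Finset.sum_add_distrib, mul_add]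
  map_smul' c f := by
    simp only [Pi.smul_apply, smul_eq_mul, ← Finset.mul_sum, RingHom.id_apply, mul_left_comm]

theorem nbLoss_eq_nbLoss1_add_nbLoss2 (p : ℕ) (θ : ℝ) (β x : Fin p → ℝ) (y : ℝ) :
    nbLoss p θ β x y = nbLoss1 p θ β x y + nbLoss2 p θ β x := by
  unfold nbLoss nbLoss1 nbLoss2
  ring

theorem stmt10
    (n p : ℕ) (hn : 1 ≤ n) (hp : 1 ≤ p)
    (θ L : ℝ) (hθ : 0 < θ) (hL : 0 < L)
    (Q : Measure ((Fin p → ℝ) × ℝ)) [IsProbabilityMeasure Q]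
    (hsupp : ∀ᵐ z ∂Q, (∀ j, |z.1 j| ≤ L) ∧ 0 ≤ z.2)
    (hInt : ∀ β : Fin p → ℝ, Integrable (fun z => nbLoss p θ β z.1 z.2) Q)
    (hInt1 : ∀ β : Fin p → ℝ, Integrable (fun z => nbLoss1 p θ β z.1 z.2) Q)
    (hInt2 : ∀ β : Fin p → ℝ, Integrable (fun z => nbLoss2 p θ β z.1) Q)
    (xs : Fin n → Fin p → ℝ) (ys : Fin n → ℝ)
    (hxs : ∀ i j, |xs i j| ≤ L) (hys : ∀ i, 0 ≤ ys i)
    (lam1 lam2 : ℝ) (hlam1 : 0 < lam1) (hlam2 : 0 < lam2)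
    (betas : Fin p → ℝ)
    (hbetas : ∀ β : Fin p → ℝ,
      ∫ z, nbLoss p θ betas z.1 z.2 ∂Q ≤ ∫ z, nbLoss p θ β z.1 z.2 ∂Q)
    (H : Finset (Fin p)) (hH : H = Finset.univ.filter (fun j => betas j ≠ 0))
    (betah : Fin p → ℝ)
    (hbetah : ∀ β : Fin p → ℝ,
      (1 / (n : ℝ)) * (∑ i, nbLoss p θ betah (xs i) (ys i))
          + lam1 * ∑ j, |betah j| + lam2 * ∑ j, (betah j) ^ 2
        ≤ (1 / (n : ℝ)) * (∑ i, nbLoss p θ β (xs i) (ys i))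
          + lam1 * ∑ j, |β j| + lam2 * ∑ j, (β j) ^ 2)
    (B : ℝ) (hBpos : 0 < B) (hB : ∀ j, |betas j| ≤ B)
    (hlam12 : lam1 = 8 * B * lam2)
    (eps : ℝ) (heps : 0 ≤ eps)
    (hemp1 : (1 / (n : ℝ)) * (∑ i, (nbLoss1 p θ betas (xs i) (ys i)
            - nbLoss1 p θ betah (xs i) (ys i)))
          - ∫ z, (nbLoss1 p θ betas z.1 z.2 - nbLoss1 p θ betah z.1 z.2) ∂Q
        ≤ lam1 / 4 * ∑ j, |betah j - betas j|)
    (hemp2 : (1 / (n : ℝ)) * (∑ i, (nbLoss2 p θ betas (xs i)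
            - nbLoss2 p θ betah (xs i)))
          - ∫ z, (nbLoss2 p θ betas z.1 - nbLoss2 p θ betah z.1) ∂Q
        ≤ lam1 / 4 * ((∑ j, |betah j - betas j|) + eps)) :
    ∑ j ∈ Hᶜ, |betah j - betas j| ≤ 3.5 * (∑ j ∈ H, |betah j - betas j|) + eps / 2 :=
  stmt10_general (empiricalMean fun i => (xs i, ys i)) Q
    (fun β => funext fun z => nbLoss_eq_nbLoss1_add_nbLoss2 p θ β z.1 z.2) hInt1 hInt2
    hlam1 hlam2.le hlam12.ge (hbetas betah) (hbetah betas) (by simp [hH]) (fun j _ => hB j)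
    hemp1 hemp2
end

section
/- Let β̂ be the elastic-net estimator with λ₂ > 0. Then for any k, l ∈ {1,…,p}: |β̂_k − β̂_l| ≤ (1/(2nλ₂))·∑_{i=1}^n θ·|x_{ik} − x_{il}|·|exp(⟨X_i,β̂⟩) − y_i| / (θ + exp(⟨X_i,β̂⟩)). -/
open Real BigOperators Finset MeasureTheory

/-
Compare the minimizer `β` with the vector `β ∘ σ` obtained by swapping its `k`-th and `l`-th
coordinates. The `ℓ¹` penalty is convex and takes the same value at both ends of the segment from
`β` to `β ∘ σ`, so it does not increase along that segment, and the derivative at `β` of the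
remaining smooth part of the objective in the direction `β ∘ σ - β` must be nonnegative. The ridge
term contributes `-2 λ₂ (β k - β l) ^ 2` to this derivative, whereas the `i`-th observation
contributes its score times `(x i k - x i l) * (β l - β k)`; dividing by `|β k - β l|` gives the
bound.
-/

open Topology

section VariationalInequality

variable {E : Type*} [AddCommGroup E] [Module ℝ E] [TopologicalSpace E] [ContinuousAdd E]
  [ContinuousSMul ℝ E]

lemma sub_le_of_isLocalMinOn_add_convexOn {f g : E → ℝ} {s : Set E} {a b : E} {D : ℝ}
    (hmin : IsLocalMinOn (fun z => f z + g z) s a) (hg : ConvexOn ℝ s g) (ha : a ∈ s) (hb : b ∈ s)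
    (hf : HasLineDerivAt ℝ f D a (b - a)) : g a - g b ≤ D := by
  have hpath : Filter.Tendsto (fun t : ℝ => a + t • (b - a)) (𝓝[>] 0) (𝓝[s] a) := by
    refine tendsto_nhdsWithin_iff.2 ⟨?_, ?_⟩
    · have hcont : Continuous fun t : ℝ => a + t • (b - a) := by fun_prop
      exact (hcont.tendsto' 0 a (by simp)).mono_left nhdsWithin_le_nhds
    · filter_upwards [Ioo_mem_nhdsGT one_pos] with t ht
      exact hg.1.add_smul_sub_mem ha hb ⟨ht.1.le, ht.2.le⟩
  refine ge_of_tendsto hf.tendsto_slope_zero_right ?_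
  filter_upwards [hpath.eventually hmin, Ioo_mem_nhdsGT one_pos] with t hle ht
  have hconv : g (a + t • (b - a)) ≤ (1 - t) * g a + t * g b := by
    have hcomb : a + t • (b - a) = (1 - t) • a + t • b := by module
    rw [hcomb]
    exact hg.2 ha hb (sub_nonneg.2 ht.2.le) ht.1.le (sub_add_cancel 1 t)
  rw [smul_eq_mul, inv_mul_eq_div, le_div_iff₀ ht.1]
  linarith

end VariationalInequality

section Grouping

variable {ι κ : Type*} [Fintype ι] [Fintype κ]

lemma hasLineDerivAt_comp_dotProduct {φ : ℝ → ℝ} {φ' : ℝ} {u b : κ → ℝ}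
    (hφ : HasDerivAt φ φ' (u ⬝ᵥ b)) (v : κ → ℝ) :
    HasLineDerivAt ℝ (fun z => φ (u ⬝ᵥ z)) (φ' * (u ⬝ᵥ v)) b v := by
  have hline : HasDerivAt (fun t : ℝ => u ⬝ᵥ b + t * (u ⬝ᵥ v)) (u ⬝ᵥ v) 0 := by
    simpa using ((hasDerivAt_id (0 : ℝ)).mul_const (u ⬝ᵥ v)).const_add (u ⬝ᵥ b)
  simpa [HasLineDerivAt, dotProduct_add, Function.comp_def] using
    HasDerivAt.comp (0 : ℝ) (by simpa using hφ) hline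

lemma hasLineDerivAt_sum_sq (b v : κ → ℝ) :
    HasLineDerivAt ℝ (fun z : κ → ℝ => ∑ j, z j ^ 2) (2 * (b ⬝ᵥ v)) b v := by
  have hcoord (j : κ) : HasDerivAt (fun t : ℝ => (b j + t * v j) ^ 2) (2 * (b j * v j)) 0 := by
    simpa [mul_assoc] using
      (((hasDerivAt_id (0 : ℝ)).mul_const (v j)).const_add (b j)).fun_pow 2
  simpa [HasLineDerivAt, dotProduct, mul_sum] using
    HasDerivAt.fun_sum (u := univ) fun j _ => hcoord j

variable [DecidableEq κ]

lemma dotProduct_comp_swap_sub {R : Type*} [CommRing R] (u v : κ → R) (k l : κ) :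
    u ⬝ᵥ (v ∘ Equiv.swap k l - v) = (u k - u l) * (v l - v k) := by
  rcases eq_or_ne k l with rfl | hkl
  · simp
  · have hvanish (j : κ) (hj : j ≠ k ∧ j ≠ l) : u j * (v (Equiv.swap k l j) - v j) = 0 := by
      rw [Equiv.swap_apply_of_ne_of_ne hj.1 hj.2, sub_self, mul_zero]
    calc u ⬝ᵥ (v ∘ Equiv.swap k l - v)
        = u k * (v (Equiv.swap k l k) - v k) + u l * (v (Equiv.swap k l l) - v l) :=
          Fintype.sum_eq_add k l hkl hvanish
      _ = (u k - u l) * (v l - v k) := by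
          rw [Equiv.swap_apply_left, Equiv.swap_apply_right]
          ring

lemma mul_sq_sub_le_of_isLocalMin_add_ridge {f g : (κ → ℝ) → ℝ} {μ D : ℝ} {b : κ → ℝ} {k l : κ}
    (hmin : IsLocalMin (fun z => f z + g z + μ * ∑ j, z j ^ 2) b) (hg : ConvexOn ℝ Set.univ g)
    (hswap : g (b ∘ Equiv.swap k l) = g b)
    (hf : HasLineDerivAt ℝ f D b (b ∘ Equiv.swap k l - b)) :
    2 * μ * (b k - b l) ^ 2 ≤ D := by
  have hsmooth : HasLineDerivAt ℝ (fun z => f z + μ * ∑ j, z j ^ 2)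
      (D + μ * (2 * (b ⬝ᵥ (b ∘ Equiv.swap k l - b)))) b (b ∘ Equiv.swap k l - b) :=
    HasDerivAt.fun_add hf (HasDerivAt.const_mul μ (hasLineDerivAt_sum_sq b _))
  have hmin' : IsLocalMinOn (fun z => f z + μ * ∑ j, z j ^ 2 + g z) Set.univ b := by
    simpa only [add_right_comm] using hmin.on Set.univ
  have hvar := sub_le_of_isLocalMinOn_add_convexOn hmin' hg trivial trivial hsmooth
  rw [hswap, dotProduct_comp_swap_sub] at hvar
  linarith

theorem abs_sub_le_of_isLocalMin_sum_add_ridge {φ : ι → ℝ → ℝ} {φ' : ι → ℝ} {x : ι → κ → ℝ}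
    {g : (κ → ℝ) → ℝ} {μ : ℝ} {b : κ → ℝ} {k l : κ} (hμ : 0 < μ)
    (hmin : IsLocalMin (fun z => ∑ i, φ i (x i ⬝ᵥ z) + g z + μ * ∑ j, z j ^ 2) b)
    (hg : ConvexOn ℝ Set.univ g) (hswap : g (b ∘ Equiv.swap k l) = g b)
    (hφ : ∀ i, HasDerivAt (φ i) (φ' i) (x i ⬝ᵥ b)) :
    |b k - b l| ≤ (∑ i, |φ' i| * |x i k - x i l|) / (2 * μ) := by
  have hloss : HasLineDerivAt ℝ (fun z => ∑ i, φ i (x i ⬝ᵥ z))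
      (∑ i, φ' i * (x i ⬝ᵥ (b ∘ Equiv.swap k l - b))) b (b ∘ Equiv.swap k l - b) :=
    HasDerivAt.fun_sum fun i _ => hasLineDerivAt_comp_dotProduct (hφ i) _
  have hmul : 2 * μ * |b k - b l| * |b k - b l| ≤
      (∑ i, |φ' i| * |x i k - x i l|) * |b k - b l| :=
    calc 2 * μ * |b k - b l| * |b k - b l|
        = 2 * μ * (b k - b l) ^ 2 := by rw [mul_assoc, abs_mul_abs_self, sq]
      _ ≤ ∑ i, φ' i * (x i ⬝ᵥ (b ∘ Equiv.swap k l - b)) :=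
          mul_sq_sub_le_of_isLocalMin_add_ridge hmin hg hswap hloss
      _ ≤ ∑ i, |φ' i| * |x i k - x i l| * |b k - b l| := by
          refine sum_le_sum fun i _ => (le_abs_self _).trans_eq ?_
          rw [dotProduct_comp_swap_sub, abs_mul, abs_mul, abs_sub_comm (b l), mul_assoc]
      _ = (∑ i, |φ' i| * |x i k - x i l|) * |b k - b l| := (sum_mul ..).symm
  rw [le_div_iff₀' (by positivity)]
  rcases (abs_nonneg (b k - b l)).eq_or_lt with hzero | hpos
  · rw [← hzero, mul_zero]
    positivity
  · exact le_of_mul_le_mul_right hmul hpos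

end Grouping

lemma convexOn_sum_abs {κ : Type*} [Fintype κ] :
    ConvexOn ℝ Set.univ fun z : κ → ℝ => ∑ j, |z j| := by
  refine ⟨convex_univ, fun z _ w _ s t hs ht _ => ?_⟩
  simp only [smul_eq_mul, mul_sum, ← sum_add_distrib]
  refine sum_le_sum fun j _ => (abs_add_le _ _).trans_eq ?_
  simp [abs_mul, abs_of_nonneg hs, abs_of_nonneg ht]

/-- The negative binomial negative log-likelihood of a single response `y` as a function of its
linear predictor `t`, up to the terms independent of `t`. -/
noncomputable def negBinomialLoss (θ y t : ℝ) : ℝ :=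
  (θ + y) * log (θ + exp t) - y * t

lemma hasDerivAt_negBinomialLoss {θ : ℝ} (hθ : 0 ≤ θ) (y t : ℝ) :
    HasDerivAt (negBinomialLoss θ y) (θ * (exp t - y) / (θ + exp t)) t := by
  have hpos : 0 < θ + exp t := by positivity
  have hlog : HasDerivAt (fun t => log (θ + exp t)) (exp t / (θ + exp t)) t :=
    ((Real.hasDerivAt_exp t).const_add θ).log hpos.ne'
  refine ((hlog.const_mul (θ + y)).sub ((hasDerivAt_id t).const_mul y)).congr_deriv ?_
  field_simp
  ring

lemma dotp_eq_dotProduct {p : ℕ} (u v : Fin p → ℝ) : dotp u v = u ⬝ᵥ v := rfl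

lemma enObj_eq_sum_negBinomialLoss (n p : ℕ) (θ : ℝ) (x : Fin n → Fin p → ℝ) (y : Fin n → ℝ)
    (lam1 lam2 : ℝ) (β : Fin p → ℝ) :
    enObj n p θ x y lam1 lam2 β =
      ∑ i, 1 / (n : ℝ) * negBinomialLoss θ (y i) (x i ⬝ᵥ β) + lam1 * ∑ j, |β j| +
        lam2 * ∑ j, β j ^ 2 := by
  simp only [enObj, negLogLik, negBinomialLoss, dotp_eq_dotProduct, neg_mul, ← mul_neg, neg_sub,
    mul_sum]

theorem stmt14_general {n p : ℕ} {θ : ℝ} (hθ : 0 ≤ θ) {x : Fin n → Fin p → ℝ} {y : Fin n → ℝ}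
    {lam1 lam2 : ℝ} (hlam1 : 0 ≤ lam1) (hlam2 : 0 < lam2) {betah : Fin p → ℝ}
    (hmin : IsLocalMin (enObj n p θ x y lam1 lam2) betah) (k l : Fin p) :
    |betah k - betah l| ≤ (1 / (2 * n * lam2)) *
      ∑ i, θ * |x i k - x i l| * |Real.exp (dotp (x i) betah) - y i|
        / (θ + Real.exp (dotp (x i) betah)) := by
  have hswap : lam1 * ∑ j, |betah (Equiv.swap k l j)| = lam1 * ∑ j, |betah j| := by
    rw [Equiv.sum_comp (Equiv.swap k l) fun j => |betah j|]
  have hscore (i : Fin n) := (hasDerivAt_negBinomialLoss hθ (y i) (x i ⬝ᵥ betah)).const_mul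
    (1 / (n : ℝ))
  rw [funext (enObj_eq_sum_negBinomialLoss n p θ x y lam1 lam2)] at hmin
  have hbound := abs_sub_le_of_isLocalMin_sum_add_ridge
    (φ := fun i t => 1 / (n : ℝ) * negBinomialLoss θ (y i) t) (g := fun z => lam1 * ∑ j, |z j|)
    hlam2 hmin (convexOn_sum_abs.smul hlam1) hswap hscore
  refine hbound.trans_eq ?_
  rw [sum_div, mul_sum]
  refine sum_congr rfl fun i _ => ?_
  have hpos : 0 < θ + exp (x i ⬝ᵥ betah) := by positivity
  rw [dotp_eq_dotProduct, abs_mul, abs_div, abs_div, abs_mul, abs_one, Nat.abs_cast,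
    abs_of_nonneg hθ, abs_of_pos hpos]
  ring

theorem stmt14
    (n p : ℕ) (hn : 1 ≤ n) (hp : 1 ≤ p)
    (θ : ℝ) (hθ : 0 < θ)
    (x : Fin n → Fin p → ℝ) (y : Fin n → ℝ) (hy : ∀ i, 0 ≤ y i)
    (lam1 lam2 : ℝ) (hlam1 : 0 < lam1) (hlam2 : 0 < lam2)
    (betah : Fin p → ℝ)
    (hmin : ∀ β : Fin p → ℝ,
      enObj n p θ x y lam1 lam2 betah ≤ enObj n p θ x y lam1 lam2 β)
    (k l : Fin p) :
    |betah k - betah l| ≤ (1 / (2 * n * lam2)) *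
      ∑ i, θ * |x i k - x i l| * |Real.exp (dotp (x i) betah) - y i|
        / (θ + Real.exp (dotp (x i) betah)) := by
  exact stmt14_general hθ.le hlam1.le hlam2 (Filter.Eventually.of_forall hmin) k l
end

section
/- Let θ > 0 and L, B > 0, and let Y_1,…,Y_n be random variables with Y_i distributed as NB(μ_i, θ) where exp(−LB) ≤ μ_i ≤ exp(LB) for each i. Then: (1) E[ (1/n)·∑_{i=1}^n (Y_i − E Y_i)² ] ≤ e^{LB}·(θ + e^{LB})/θ; and (2) for every i, Var( (Y_i − E Y_i)² ) ≤ (2 + 6/θ)·( e^{LB}·(θ + e^{LB})/θ )² + e^{LB}·(θ + e^{LB})/θ. -/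
open Real BigOperators Finset MeasureTheory ProbabilityTheory

/-- The negative binomial distribution `NB(μ,θ)` on `ℝ` (supported on `ℕ`),
with mass function `Γ(θ+m)/(Γ(θ)·m!)·(θ/(θ+μ))^θ·(μ/(θ+μ))^m` at `m : ℕ`. -/
noncomputable def nbMeasure (θ mu : ℝ) : Measure ℝ :=
  Measure.sum fun m : ℕ =>
    (ENNReal.ofReal (Real.Gamma (θ + m) / (Real.Gamma θ * (Nat.factorial m : ℝ)) *
        (θ / (θ + mu)) ^ (θ : ℝ) * (mu / (θ + mu)) ^ m)) •
      Measure.dirac (m : ℝ)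

/-!
The binomial series says that the masses of `NB(μ, θ)` sum to `1`. Weighting `NB(μ, θ)` by the
falling factorial `(x)_k = x(x - 1)⋯(x - k + 1)` and shifting by `k` gives
`θ(θ + 1)⋯(θ + k - 1)(μ/θ)^k` times `NB(μ(θ + k)/θ, θ + k)`, the negative binomial distribution
with the same success probability `θ/(θ + μ)`; this constant is therefore the `k`-th factorial
moment. Expanding `(x - μ)^2` and `(x - μ)^4` in falling factorials yields the second and fourth
central moments `v = μ(θ + μ)/θ` and `(3 + 6/θ)v² + v`. The variance of the squared deviation is
the fourth central moment minus `v²`, and `v` increases with `μ ≥ 0`.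
-/

section GammaSeries

lemma gamma_add_natCast {a : ℝ} (ha : ∀ k : ℕ, a ≠ -k) (n : ℕ) :
    Gamma (a + n) = (ascPochhammer ℝ n).eval a * Gamma a := by
  induction n with
  | zero => simp
  | succ n ih =>
    have h : a + n ≠ 0 := fun h => ha n (eq_neg_of_add_eq_zero_left h)
    rw [Nat.cast_succ, ← add_assoc, Gamma_add_one h, ih, ascPochhammer_succ_eval]
    ring

lemma ringChoose_add_natCast_sub_one_eq_gamma {a : ℝ} (ha : ∀ k : ℕ, a ≠ -k) (n : ℕ) :
    Ring.choose (a + n - 1) n = Gamma (a + n) / (Gamma a * n.factorial) := by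
  have h := Ring.factorial_nsmul_multichoose_eq_ascPochhammer a n
  rw [nsmul_eq_mul, Polynomial.ascPochhammer_smeval_eq_eval, Ring.multichoose_eq] at h
  have hΓ : Gamma a ≠ 0 := Gamma_ne_zero ha
  rw [gamma_add_natCast ha, ← h]
  field_simp

lemma hasSum_gamma_div_factorial_mul_pow {a x : ℝ} (ha : ∀ k : ℕ, a ≠ -k) (hx : |x| < 1) :
    HasSum (fun n : ℕ => Gamma (a + n) / (Gamma a * n.factorial) * x ^ n) ((1 - x) ^ (-a)) := by
  have hball : x ∈ Metric.eball (0 : ℝ) 1 := by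
    simpa [← ofReal_norm, ENNReal.ofReal_lt_one] using hx
  have h := (one_div_one_sub_rpow_hasFPowerSeriesOnBall_zero a).hasSum hball
  have h1x : 0 ≤ 1 - x := sub_nonneg.2 (abs_lt.1 hx).2.le
  simpa only [FormalMultilinearSeries.ofScalars_apply_eq, smul_eq_mul, zero_add, one_div,
    ringChoose_add_natCast_sub_one_eq_gamma ha, rpow_neg h1x] using h

end GammaSeries

section Weights

/-- The probability mass function of `NB(μ, θ)`, kept real-valued so that moments of `nbMeasure`
become real series. -/
noncomputable def nbPMFReal (θ mu : ℝ) (m : ℕ) : ℝ :=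
  Gamma (θ + m) / (Gamma θ * m.factorial) * (θ / (θ + mu)) ^ θ * (mu / (θ + mu)) ^ m

variable {θ mu : ℝ}

lemma nbPMFReal_nonneg (hθ : 0 < θ) (hmu : 0 ≤ mu) (m : ℕ) : 0 ≤ nbPMFReal θ mu m := by
  unfold nbPMFReal
  positivity

lemma hasSum_nbPMFReal (hθ : 0 < θ) (hmu : 0 ≤ mu) : HasSum (nbPMFReal θ mu) 1 := by
  have hpos : 0 < θ + mu := by positivity
  have hq : |mu / (θ + mu)| < 1 := by
    rw [abs_of_nonneg (by positivity), div_lt_one hpos]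
    linarith
  have hp : 1 - mu / (θ + mu) = θ / (θ + mu) := by
    field_simp
    ring
  have hθ' (k : ℕ) : θ ≠ -k := by linarith [k.cast_nonneg (α := ℝ)]
  have h := (hasSum_gamma_div_factorial_mul_pow hθ' hq).mul_left ((θ / (θ + mu)) ^ θ)
  rw [hp, ← rpow_add (by positivity), add_neg_cancel, rpow_zero] at h
  refine h.congr_fun fun m => ?_
  unfold nbPMFReal
  ring

lemma nbPMFReal_add_mul_descFactorial (hθ : 0 < θ) (hmu : 0 ≤ mu) (m k : ℕ) :
    nbPMFReal θ mu (m + k) * (m + k).descFactorial k =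
      (ascPochhammer ℝ k).eval θ * (mu / θ) ^ k * nbPMFReal (θ + k) (mu * (θ + k) / θ) m := by
  have hsum : θ + k + mu * (θ + k) / θ = (θ + k) * (θ + mu) / θ := by
    field_simp
  have hp : (θ + k) / (θ + k + mu * (θ + k) / θ) = θ / (θ + mu) := by
    rw [hsum]
    field_simp
  have hq : mu * (θ + k) / θ / (θ + k + mu * (θ + k) / θ) = mu / (θ + mu) := by
    rw [hsum]
    field_simp
  have hq' : mu / (θ + mu) = mu / θ * (θ / (θ + mu)) := by
    field_simp
  have hΓ : Gamma (θ + k) = (ascPochhammer ℝ k).eval θ * Gamma θ :=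
    gamma_add_natCast (fun j => by linarith [j.cast_nonneg (α := ℝ)]) k
  have hfac : ((m + k).factorial : ℝ) = m.factorial * (m + k).descFactorial k := by
    have h := Nat.factorial_mul_descFactorial (Nat.le_add_left k m)
    rw [Nat.add_sub_cancel] at h
    exact_mod_cast h.symm
  have hθΓ : Gamma θ ≠ 0 := (Gamma_pos_of_pos hθ).ne'
  have hasc : (ascPochhammer ℝ k).eval θ ≠ 0 := (ascPochhammer_pos k θ hθ).ne'
  have hdesc : ((m + k).descFactorial k : ℝ) ≠ 0 := by
    exact_mod_cast (Nat.descFactorial_pos.2 (Nat.le_add_left k m)).ne'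
  unfold nbPMFReal
  rw [hp, hq, rpow_add_natCast (by positivity), pow_add, hΓ, hfac, Nat.cast_add,
    show θ + k + m = θ + (m + k) by ring]
  nth_rewrite 2 [hq']
  rw [mul_pow]
  field_simp

lemma hasSum_nbPMFReal_mul_descFactorial (hθ : 0 < θ) (hmu : 0 ≤ mu) (k : ℕ) :
    HasSum (fun m => nbPMFReal θ mu m * m.descFactorial k)
      ((ascPochhammer ℝ k).eval θ * (mu / θ) ^ k) := by
  have hzero : ∑ m ∈ range k, nbPMFReal θ mu m * m.descFactorial k = 0 :=
    sum_eq_zero fun m hm => by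
      rw [Nat.descFactorial_of_lt (mem_range.1 hm), Nat.cast_zero, mul_zero]
  rw [← hasSum_nat_add_iff' k, hzero, sub_zero]
  simpa only [nbPMFReal_add_mul_descFactorial hθ hmu, mul_one] using
    (hasSum_nbPMFReal (θ := θ + k) (mu := mu * (θ + k) / θ) (by positivity)
      (by positivity)).mul_left _

end Weights

section Moments

variable {θ mu : ℝ}

lemma integrable_nbMeasure_iff (hθ : 0 < θ) (hmu : 0 ≤ mu) {f : ℝ → ℝ} :
    Integrable f (nbMeasure θ mu) ↔ Summable fun m : ℕ => nbPMFReal θ mu m * ‖f m‖ := by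
  refine (integrable_sum_dirac_iff fun _ => ENNReal.ofReal_ne_top).trans (iff_of_eq ?_)
  exact congrArg Summable <| funext fun m =>
    congrArg (· * ‖f m‖) (ENNReal.toReal_ofReal (nbPMFReal_nonneg hθ hmu m))

lemma integral_nbMeasure (hθ : 0 < θ) (hmu : 0 ≤ mu) (f : ℝ → ℝ) :
    ∫ x, f x ∂nbMeasure θ mu = ∑' m : ℕ, nbPMFReal θ mu m * f m := by
  refine (integral_sum_dirac fun _ => ENNReal.ofReal_ne_top).trans ?_
  exact tsum_congr fun m =>
    congrArg (· * f m) (ENNReal.toReal_ofReal (nbPMFReal_nonneg hθ hmu m))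

lemma integrable_descPochhammer_nbMeasure (hθ : 0 < θ) (hmu : 0 ≤ mu) (k : ℕ) :
    Integrable (fun x => (descPochhammer ℝ k).eval x) (nbMeasure θ mu) := by
  rw [integrable_nbMeasure_iff hθ hmu]
  simpa only [descPochhammer_eval_eq_descFactorial, RCLike.norm_natCast] using
    (hasSum_nbPMFReal_mul_descFactorial hθ hmu k).summable

lemma integral_descPochhammer_nbMeasure (hθ : 0 < θ) (hmu : 0 ≤ mu) (k : ℕ) :
    ∫ x, (descPochhammer ℝ k).eval x ∂nbMeasure θ mu =
      (ascPochhammer ℝ k).eval θ * (mu / θ) ^ k := by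
  rw [integral_nbMeasure hθ hmu]
  simpa only [descPochhammer_eval_eq_descFactorial] using
    (hasSum_nbPMFReal_mul_descFactorial hθ hmu k).tsum_eq

lemma isProbabilityMeasure_nbMeasure (hθ : 0 < θ) (hmu : 0 ≤ mu) :
    IsProbabilityMeasure (nbMeasure θ mu) := by
  have hone : ∫ _, (1 : ℝ) ∂nbMeasure θ mu = 1 := by
    simpa using integral_descPochhammer_nbMeasure hθ hmu 0
  rw [isProbabilityMeasure_iff_real]
  simpa using hone

lemma integral_sum_mul_descPochhammer_nbMeasure (hθ : 0 < θ) (hmu : 0 ≤ mu) {n : ℕ}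
    (c : Fin n → ℝ) :
    ∫ x, ∑ k, c k * (descPochhammer ℝ k).eval x ∂nbMeasure θ mu =
      ∑ k, c k * ((ascPochhammer ℝ k).eval θ * (mu / θ) ^ (k : ℕ)) := by
  rw [integral_finsetSum univ fun (k : Fin n) _ =>
    (integrable_descPochhammer_nbMeasure hθ hmu k).const_mul (c k)]
  simp only [integral_const_mul, integral_descPochhammer_nbMeasure hθ hmu]

lemma integrable_pow_mul_descPochhammer_nbMeasure (hθ : 0 < θ) (hmu : 0 ≤ mu) (j k : ℕ) :
    Integrable (fun x => x ^ j * (descPochhammer ℝ k).eval x) (nbMeasure θ mu) := by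
  induction j generalizing k with
  | zero => simpa using integrable_descPochhammer_nbMeasure hθ hmu k
  | succ j ih =>
    refine ((ih (k + 1)).add ((ih k).const_mul k)).congr (.of_forall fun x => ?_)
    simp only [Pi.add_apply, descPochhammer_succ_eval]
    ring

lemma integrable_pow_nbMeasure (hθ : 0 < θ) (hmu : 0 ≤ mu) (j : ℕ) :
    Integrable (fun x => x ^ j) (nbMeasure θ mu) := by
  simpa using integrable_pow_mul_descPochhammer_nbMeasure hθ hmu j 0

lemma memLp_id_nbMeasure (hθ : 0 < θ) (hmu : 0 ≤ mu) (p : ℕ) :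
    MemLp id p (nbMeasure θ mu) := by
  rcases eq_or_ne p 0 with rfl | hp
  · simpa using aestronglyMeasurable_id
  · rw [← integrable_norm_rpow_iff aestronglyMeasurable_id (by exact_mod_cast hp)
      (ENNReal.natCast_ne_top p)]
    simpa using (integrable_pow_nbMeasure hθ hmu p).norm

lemma integral_id_nbMeasure (hθ : 0 < θ) (hmu : 0 ≤ mu) : ∫ x, x ∂nbMeasure θ mu = mu := by
  have h := integral_descPochhammer_nbMeasure hθ hmu 1
  simpa [mul_div_cancel₀ mu hθ.ne'] using h

lemma integral_sub_sq_nbMeasure (hθ : 0 < θ) (hmu : 0 ≤ mu) :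
    ∫ x, (x - mu) ^ 2 ∂nbMeasure θ mu = mu * (θ + mu) / θ := by
  have hexp (x : ℝ) : (x - mu) ^ 2 =
      ∑ k, ![mu ^ 2, 1 - 2 * mu, 1] k * (descPochhammer ℝ k).eval x := by
    simp only [Fin.sum_univ_three, Matrix.cons_val, Fin.coe_ofNat_eq_mod, Nat.zero_mod,
      descPochhammer_succ_eval, descPochhammer_zero, Polynomial.eval_one]
    ring
  simp only [hexp, integral_sum_mul_descPochhammer_nbMeasure hθ hmu]
  simp only [Fin.sum_univ_three, Matrix.cons_val, Fin.coe_ofNat_eq_mod, Nat.zero_mod,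
    Nat.succ_eq_add_one, Nat.reduceAdd, Nat.reduceMod, ascPochhammer_succ_eval, ascPochhammer_zero,
    Polynomial.eval_one, Nat.cast_zero, Nat.cast_one, add_zero]
  field_simp
  ring

lemma integral_sub_pow_four_nbMeasure (hθ : 0 < θ) (hmu : 0 ≤ mu) :
    ∫ x, (x - mu) ^ 4 ∂nbMeasure θ mu =
      (3 + 6 / θ) * (mu * (θ + mu) / θ) ^ 2 + mu * (θ + mu) / θ := by
  have hexp (x : ℝ) : (x - mu) ^ 4 =
      ∑ k, ![mu ^ 4, 1 - 4 * mu + 6 * mu ^ 2 - 4 * mu ^ 3, 7 - 12 * mu + 6 * mu ^ 2,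
        6 - 4 * mu, 1] k * (descPochhammer ℝ k).eval x := by
    simp only [Fin.sum_univ_five, Matrix.cons_val, Fin.coe_ofNat_eq_mod, Nat.zero_mod,
      descPochhammer_succ_eval, descPochhammer_zero, Polynomial.eval_one]
    ring
  simp only [hexp, integral_sum_mul_descPochhammer_nbMeasure hθ hmu]
  simp only [Fin.sum_univ_five, Matrix.cons_val, Fin.coe_ofNat_eq_mod, Nat.zero_mod,
    Nat.succ_eq_add_one, Nat.reduceAdd, Nat.reduceMod, ascPochhammer_succ_eval, ascPochhammer_zero,
    Polynomial.eval_one, Nat.cast_zero, Nat.cast_one, Nat.cast_ofNat, add_zero]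
  field_simp
  ring

end Moments

section RandomVariable

variable {Ω : Type*} [MeasurableSpace Ω] {P : Measure Ω} {X : Ω → ℝ}

lemma variance_sub_integral_sq [IsProbabilityMeasure P] (hX : MemLp X 4 P) :
    Var[fun ω => (X ω - P[X]) ^ 2; P] = centralMoment X 4 P - Var[X; P] ^ 2 := by
  have hdev : MemLp (fun ω => X ω - P[X]) 4 P := hX.sub (memLp_const _)
  have : ENNReal.HolderTriple 4 4 2 := .of_toReal ⟨by norm_num, by norm_num, by norm_num⟩
  have hsq : MemLp (fun ω => (X ω - P[X]) ^ 2) 2 P := by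
    simpa only [sq] using hdev.mul' hdev
  rw [variance_eq_sub hsq, variance_eq_integral hX.aemeasurable, centralMoment]
  simp only [Pi.pow_apply, Pi.sub_apply, ← pow_mul]

lemma centralMoment_eq_of_hasLaw {ν : Measure ℝ} (hX : HasLaw X ν P) (p : ℕ) :
    centralMoment X p P = centralMoment id p ν := by
  rw [centralMoment, centralMoment, hX.integral_eq]
  exact hX.integral_comp (f := (id - fun _ => ν[id]) ^ p)
    ((measurable_id.sub_const _).pow_const p).aestronglyMeasurable

variable {θ mu : ℝ}

lemma memLp_of_hasLaw_nbMeasure (hθ : 0 < θ) (hmu : 0 ≤ mu)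
    (hX : HasLaw X (nbMeasure θ mu) P) (p : ℕ) : MemLp X p P :=
  MemLp.comp_of_map (f := X) (g := id) (hX.map_eq ▸ memLp_id_nbMeasure hθ hmu p) hX.aemeasurable

lemma variance_of_hasLaw_nbMeasure (hθ : 0 < θ) (hmu : 0 ≤ mu)
    (hX : HasLaw X (nbMeasure θ mu) P) : Var[X; P] = mu * (θ + mu) / θ := by
  rw [hX.variance_eq, variance_eq_integral aemeasurable_id]
  simp only [id_eq, integral_id_nbMeasure hθ hmu, integral_sub_sq_nbMeasure hθ hmu]

lemma centralMoment_four_of_hasLaw_nbMeasure (hθ : 0 < θ) (hmu : 0 ≤ mu)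
    (hX : HasLaw X (nbMeasure θ mu) P) :
    centralMoment X 4 P = (3 + 6 / θ) * (mu * (θ + mu) / θ) ^ 2 + mu * (θ + mu) / θ := by
  rw [centralMoment_eq_of_hasLaw hX, centralMoment]
  simp only [Pi.pow_apply, Pi.sub_apply, id_eq, integral_id_nbMeasure hθ hmu,
    integral_sub_pow_four_nbMeasure hθ hmu]

lemma variance_sub_integral_sq_of_hasLaw_nbMeasure (hθ : 0 < θ) (hmu : 0 ≤ mu)
    (hX : HasLaw X (nbMeasure θ mu) P) :
    Var[fun ω => (X ω - P[X]) ^ 2; P] =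
      (2 + 6 / θ) * (mu * (θ + mu) / θ) ^ 2 + mu * (θ + mu) / θ := by
  have := isProbabilityMeasure_nbMeasure hθ hmu
  have := hX.isProbabilityMeasure
  rw [variance_sub_integral_sq (memLp_of_hasLaw_nbMeasure hθ hmu hX 4),
    centralMoment_four_of_hasLaw_nbMeasure hθ hmu hX, variance_of_hasLaw_nbMeasure hθ hmu hX]
  ring

lemma integral_mean_sub_integral_sq [IsFiniteMeasure P] {ι : Type*} [Fintype ι] {Y : ι → Ω → ℝ}
    (hY : ∀ i, MemLp (Y i) 2 P) :
    ∫ ω, (1 / (Fintype.card ι : ℝ)) * ∑ i, (Y i ω - P[Y i]) ^ 2 ∂P =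
      (1 / (Fintype.card ι : ℝ)) * ∑ i, Var[Y i; P] := by
  have hint (i : ι) : Integrable (fun ω => (Y i ω - P[Y i]) ^ 2) P :=
    ((hY i).sub (memLp_const _)).integrable_sq
  rw [integral_const_mul, integral_finsetSum univ fun i _ => hint i]
  simp only [variance_eq_integral (hY _).aemeasurable]

end RandomVariable

theorem stmt16_general {Ω ι : Type*} [MeasurableSpace Ω] {P : Measure Ω} [Fintype ι] [Nonempty ι]
    {θ M : ℝ} (hθ : 0 < θ) {mu : ι → ℝ} (hmu : ∀ i, 0 ≤ mu i) (hM : ∀ i, mu i ≤ M)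
    {Y : ι → Ω → ℝ} (hY : ∀ i, HasLaw (Y i) (nbMeasure θ (mu i)) P) :
    ∫ ω, (1 / (Fintype.card ι : ℝ)) * ∑ i, (Y i ω - P[Y i]) ^ 2 ∂P ≤ M * (θ + M) / θ ∧
    ∀ i, Var[fun ω => (Y i ω - P[Y i]) ^ 2; P] ≤
      (2 + 6 / θ) * (M * (θ + M) / θ) ^ 2 + M * (θ + M) / θ := by
  have hvar (i : ι) : mu i * (θ + mu i) / θ ≤ M * (θ + M) / θ := by
    have := hmu i
    have := hM i
    gcongr
    linarith
  refine ⟨?_, fun i => ?_⟩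
  · have := isProbabilityMeasure_nbMeasure hθ (hmu (Classical.arbitrary ι))
    have := (hY (Classical.arbitrary ι)).isProbabilityMeasure
    rw [integral_mean_sub_integral_sq fun i => memLp_of_hasLaw_nbMeasure hθ (hmu i) (hY i) 2,
      one_div_mul_eq_div, div_le_iff₀' (by exact_mod_cast Fintype.card_pos), ← nsmul_eq_mul]
    refine sum_le_card_nsmul univ _ _ fun i _ => ?_
    exact (variance_of_hasLaw_nbMeasure hθ (hmu i) (hY i)).trans_le (hvar i)
  · have := hmu i
    have := hvar i
    rw [variance_sub_integral_sq_of_hasLaw_nbMeasure hθ (hmu i) (hY i)]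
    gcongr

theorem stmt16
    {Ω : Type*} [MeasurableSpace Ω] (μmeas : Measure Ω) [IsProbabilityMeasure μmeas]
    (n : ℕ) (hn : 1 ≤ n)
    (θ L B : ℝ) (hθ : 0 < θ) (hL : 0 < L) (hB : 0 < B)
    (mu : Fin n → ℝ)
    (hmulb : ∀ i, Real.exp (-(L * B)) ≤ mu i)
    (hmuub : ∀ i, mu i ≤ Real.exp (L * B))
    (Y : Fin n → Ω → ℝ) (hYmeas : ∀ i, Measurable (Y i))
    (hYdist : ∀ i, μmeas.map (Y i) = nbMeasure θ (mu i)) :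
    (∫ ω, (1 / (n : ℝ)) * ∑ i, (Y i ω - ∫ ω', Y i ω' ∂μmeas) ^ 2 ∂μmeas
        ≤ Real.exp (L * B) * (θ + Real.exp (L * B)) / θ) ∧
    ∀ i, variance (fun ω => (Y i ω - ∫ ω', Y i ω' ∂μmeas) ^ 2) μmeas
        ≤ (2 + 6 / θ) * (Real.exp (L * B) * (θ + Real.exp (L * B)) / θ) ^ 2
          + Real.exp (L * B) * (θ + Real.exp (L * B)) / θ := by
  have : Nonempty (Fin n) := ⟨⟨0, hn⟩⟩
  simpa only [Fintype.card_fin] using stmt16_general hθ (fun i => (exp_pos _).le.trans (hmulb i))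
    hmuub fun i => ⟨(hYmeas i).aemeasurable, hYdist i⟩
end
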